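/- arXiv:1603.04344 — 4 statements merged into one kernel-verified Lean document; each statement's English description precedes it below -/
import Mathlib

section
/- Suppose condition B holds, and let ‖p̃_{ε,ij}‖, ε ∈ (0, ε₀], be another family of stochastic matrices satisfying condition E: p_{ε,ij} − p̃_{ε,ij} → 0 as ε → 0 for all i, j ∈ X. Then there exists ε₀'' ∈ (0, ε₀] such that the Markov chain with transition matrix ‖p̃_{ε,ij}‖ is ergodic for every ε ∈ (0, ε₀''], and its stationary distribution π̃_{ε,i} satisfies π_{ε,i} − π̃_{ε,i} → 0 as ε → 0, for every i ∈ X. -/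
open MeasureTheory Filter Set
open scoped Topology

noncomputable section

/-- Condition B: there exists a ring chain of states `c 0, c 1, …, c N = c 0`
containing all states of the phase space, with
`liminf_{ε→0+} p ε (c (k-1)) (c k) > 0` for `k = 1, …, N`. -/
def CondB {m : ℕ} (p : ℝ → Fin m → Fin m → ℝ) : Prop :=
  ∃ N : ℕ, 0 < N ∧ ∃ c : ℕ → Fin m, c N = c 0 ∧
    (∀ i : Fin m, ∃ k ≤ N, c k = i) ∧
    ∀ k < N, 0 < Filter.liminf (fun ε => p ε (c k) (c (k + 1))) (𝓝[>] (0 : ℝ))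

/-- Ergodicity of a finite Markov chain: the whole state space is one class of
communicating states. -/
def IsErgodicMatrix {m : ℕ} (P : Matrix (Fin m) (Fin m) ℝ) : Prop :=
  ∀ i j, ∃ n : ℕ, 0 < n ∧ 0 < (P ^ n) i j

/-- `π` is a stationary distribution of the transition matrix `p`. -/
def IsStationaryDist {m : ℕ} (p : Fin m → Fin m → ℝ) (π : Fin m → ℝ) : Prop :=
  (∀ i, 0 ≤ π i) ∧ (∑ i, π i = 1) ∧ ∀ j, π j = ∑ i, π i * p i j

lemma aux_abs {m : ℕ} (P : Matrix (Fin m) (Fin m) ℝ) (h0 : ∀ i j, 0 ≤ P i j)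
    (h1 : ∀ i, ∑ j, P i j = 1) (v : Fin m → ℝ) (hv : ∀ j, v j = ∑ i, v i * P i j) :
    ∀ j, |v j| = ∑ i, |v i| * P i j := by
  have hle : ∀ j ∈ Finset.univ, |v j| ≤ ∑ i, |v i| * P i j := by
    intro j _
    calc |v j| = |∑ i, v i * P i j| := by rw [← hv j]
      _ ≤ ∑ i, |v i * P i j| := Finset.abs_sum_le_sum_abs _ _
      _ = ∑ i, |v i| * P i j := by
        refine Finset.sum_congr rfl fun i _ => ?_
        rw [abs_mul, abs_of_nonneg (h0 i j)]
  have hs : ∑ j, |v j| = ∑ j, ∑ i, |v i| * P i j := by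
    rw [Finset.sum_comm]
    refine Finset.sum_congr rfl fun i _ => ?_
    rw [← Finset.mul_sum, h1, mul_one]
  intro j
  exact (Finset.sum_eq_sum_iff_of_le hle).1 hs j (Finset.mem_univ j)

lemma aux_exists {m : ℕ} (hm : 0 < m) (P : Matrix (Fin m) (Fin m) ℝ) (h0 : ∀ i j, 0 ≤ P i j)
    (h1 : ∀ i, ∑ j, P i j = 1) : ∃ q : Fin m → ℝ, IsStationaryDist (fun i j => P i j) q := by
  have hd : (P - 1).det = 0 := by
    refine Matrix.exists_mulVec_eq_zero_iff.1 ⟨fun _ => 1, ?_, ?_⟩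
    · intro h
      have := congrFun h ⟨0, hm⟩
      simp at this
    · ext i
      rw [Matrix.sub_mulVec, Matrix.one_mulVec]
      simp [Matrix.mulVec, dotProduct, h1]
  obtain ⟨v, hv, hv'⟩ := Matrix.exists_vecMul_eq_zero_iff.2 hd
  have hst : ∀ j, v j = ∑ i, v i * P i j := by
    intro j
    have := congrFun hv' j
    rw [Matrix.vecMul_sub, Matrix.vecMul_one] at this
    simp only [Matrix.vecMul, dotProduct, Pi.sub_apply, Pi.zero_apply] at this
    linarith
  have ha := aux_abs P h0 h1 v hst
  obtain ⟨k, hk⟩ := Function.ne_iff.1 hv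
  have hS : 0 < ∑ i, |v i| :=
    Finset.sum_pos' (fun i _ => abs_nonneg _) ⟨k, Finset.mem_univ k, abs_pos.2 hk⟩
  refine ⟨fun i => |v i| / ∑ i, |v i|, fun i => by positivity, ?_, fun j => ?_⟩
  · rw [← Finset.sum_div, div_self hS.ne']
  · simp only [div_mul_eq_mul_div]
    rw [← Finset.sum_div, ← ha j]

lemma aux_pos {m : ℕ} (P : Matrix (Fin m) (Fin m) ℝ) (h0 : ∀ i j, 0 ≤ P i j)
    (u : Fin m → ℝ) (hu0 : ∀ i, 0 ≤ u i) (hu : ∀ j, u j = ∑ i, u i * P i j) (i j : Fin m)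
    (hr : Relation.TransGen (fun i j => 0 < P i j) i j) (hi : 0 < u i) : 0 < u j := by
  have step : ∀ a b, 0 < P a b → 0 < u a → 0 < u b := by
    intro a b hab ha
    rw [hu b]
    exact Finset.sum_pos' (fun i _ => mul_nonneg (hu0 i) (h0 i b))
      ⟨a, Finset.mem_univ a, mul_pos ha hab⟩
  induction hr with
  | single h => exact step _ _ h hi
  | tail _ h ih => exact step _ _ h ih

lemma aux_unique {m : ℕ} (P : Matrix (Fin m) (Fin m) ℝ) (h0 : ∀ i j, 0 ≤ P i j)
    (h1 : ∀ i, ∑ j, P i j = 1) (hr : ∀ i j, Relation.TransGen (fun i j => 0 < P i j) i j)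
    (q r : Fin m → ℝ) (hq : IsStationaryDist (fun i j => P i j) q)
    (hr' : IsStationaryDist (fun i j => P i j) r) : q = r := by
  obtain ⟨_, hq1, hq2⟩ := hq
  obtain ⟨_, hr1, hr2⟩ := hr'
  have key : ∀ v : Fin m → ℝ, (∀ j, v j = ∑ i, v i * P i j) → ∑ i, v i = 0 → ∀ i, 0 ≤ v i := by
    intro v hv hs i
    by_contra! hi
    have ha := aux_abs P h0 h1 v hv
    have hall : ∀ j, 0 < |v j| - v j := by
      intro j
      refine aux_pos P h0 (fun j => |v j| - v j) (fun j => sub_nonneg.2 (le_abs_self _)) ?_ i j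
        (hr i j) ?_
      · intro j
        simp only [sub_mul, Finset.sum_sub_distrib]
        rw [← ha j, ← hv j]
      · have := abs_nonneg (v i)
        linarith
    have hneg : ∀ j, v j < 0 := by
      intro j
      by_contra! h
      have := hall j
      rw [abs_of_nonneg h] at this
      linarith
    have : ∑ j, v j < 0 := Finset.sum_neg (fun j _ => hneg j) ⟨i, Finset.mem_univ i⟩
    linarith
  have k1 := key (fun i => q i - r i) (fun j => by
    simp only [sub_mul, Finset.sum_sub_distrib]
    rw [← hq2 j, ← hr2 j]) (by simp [Finset.sum_sub_distrib, hq1, hr1])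
  have k2 := key (fun i => r i - q i) (fun j => by
    simp only [sub_mul, Finset.sum_sub_distrib]
    rw [← hq2 j, ← hr2 j]) (by simp [Finset.sum_sub_distrib, hq1, hr1])
  ext i
  have a := k1 i
  have b := k2 i
  linarith

lemma aux_erg {m : ℕ} (P : Matrix (Fin m) (Fin m) ℝ) (h0 : ∀ i j, 0 ≤ P i j)
    (hr : ∀ i j, Relation.TransGen (fun i j => 0 < P i j) i j) : IsErgodicMatrix P := by
  have hpow : ∀ n : ℕ, ∀ i j, 0 ≤ (P ^ n) i j := by
    intro n
    induction n with
    | zero =>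
      intro i j
      rw [pow_zero, Matrix.one_apply]
      split_ifs <;> norm_num
    | succ n ih =>
      intro i j
      rw [pow_succ, Matrix.mul_apply]
      exact Finset.sum_nonneg fun k _ => mul_nonneg (ih i k) (h0 k j)
  intro i j
  induction hr i j with
  | single h => exact ⟨1, one_pos, by simpa using h⟩
  | tail _ h ih =>
    obtain ⟨n, hn, hp⟩ := ih
    refine ⟨n + 1, n.succ_pos, ?_⟩
    rw [pow_succ, Matrix.mul_apply]
    exact Finset.sum_pos' (fun k _ => mul_nonneg (hpow n i k) (h0 k _))
      ⟨_, Finset.mem_univ _, mul_pos hp h⟩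

lemma aux_ring {m : ℕ} (R : Fin m → Fin m → Prop) (N : ℕ) (hN : 0 < N) (c : ℕ → Fin m)
    (hc : c N = c 0) (hall : ∀ i : Fin m, ∃ k ≤ N, c k = i) (hR : ∀ k < N, R (c k) (c (k + 1))) :
    ∀ i j, Relation.TransGen R i j := by
  have hfrom : ∀ k, k < N → Relation.TransGen R (c 0) (c (k + 1)) := by
    intro k
    induction k with
    | zero => exact fun h => .single (hR 0 h)
    | succ k ih => exact fun h => (ih (by omega)).tail (hR _ h)
  have hto : ∀ d, ∀ k, k + d + 1 = N → Relation.TransGen R (c k) (c 0) := by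
    intro d
    induction d with
    | zero =>
      intro k hk
      rw [← hc, ← hk]
      exact .single (hR k (by omega))
    | succ d ih =>
      intro k hk
      exact .head (hR k (by omega)) (ih (k + 1) (by omega))
  have h00 : Relation.TransGen R (c 0) (c 0) := hto (N - 1) 0 (by omega)
  intro i j
  obtain ⟨a, ha, rfl⟩ := hall i
  obtain ⟨b, hb, rfl⟩ := hall j
  have h1 : Relation.TransGen R (c a) (c 0) := by
    rcases ha.lt_or_eq with h | h
    · exact hto (N - 1 - a) a (by omega)
    · rw [h, hc]; exact h00
  have h2 : Relation.TransGen R (c 0) (c b) := by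
    rcases b with _ | b
    · exact h00
    · exact hfrom b (by omega)
  exact h1.trans h2

lemma aux_lim (U : Ultrafilter ℝ) (f : ℝ → ℝ) (hf : ∀ᶠ ε in (U : Filter ℝ), f ε ∈ Icc (0:ℝ) 1) :
    ∃ a, Tendsto f U (𝓝 a) := by
  obtain ⟨a, _, ha⟩ := (isCompact_Icc (a := (0:ℝ)) (b := 1)).ultrafilter_le_nhds' (U.map f) hf
  exact ⟨a, ha⟩

lemma aux_limstat {m : ℕ} (l : Filter ℝ) [l.NeBot] (p : ℝ → Matrix (Fin m) (Fin m) ℝ)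
    (π : ℝ → Fin m → ℝ) (P : Fin m → Fin m → ℝ) (q : Fin m → ℝ)
    (hp : ∀ i j, Tendsto (fun ε => p ε i j) l (𝓝 (P i j)))
    (hq : ∀ i, Tendsto (fun ε => π ε i) l (𝓝 (q i)))
    (h : ∀ᶠ ε in l, IsStationaryDist (fun i j => p ε i j) (π ε)) : IsStationaryDist P q := by
  refine ⟨fun i => ge_of_tendsto (hq i) (h.mono fun ε h => h.1 i), ?_, fun j => ?_⟩
  · refine tendsto_nhds_unique (tendsto_finsetSum _ fun i _ => hq i) ?_
    exact tendsto_const_nhds.congr' (h.mono fun ε h => h.2.1.symm)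
  · refine tendsto_nhds_unique (hq j) ?_
    refine (tendsto_finsetSum _ fun i _ => (hq i).mul (hp i j)).congr' ?_
    exact h.mono fun ε h => (h.2.2 j).symm

lemma aux_mem {m : ℕ} (f : Fin m → ℝ) (h0 : ∀ i, 0 ≤ f i) (h1 : ∑ i, f i = 1) (i : Fin m) :
    f i ∈ Icc (0:ℝ) 1 :=
  ⟨h0 i, h1 ▸ Finset.single_le_sum (fun j _ => h0 j) (Finset.mem_univ i)⟩

/-- Lemma 1 (ii): under conditions B and E, the perturbed chains with
transition matrices `p̃ ε` are ergodic for small `ε` and their stationary distributions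
are asymptotically equivalent to those of the chains `p ε`. -/
theorem stmt1 {m : ℕ} (hm : 0 < m) (ε₀ : ℝ) (hε₀ : 0 < ε₀)
    (p ptil : ℝ → Matrix (Fin m) (Fin m) ℝ)
    (hstoch : ∀ ε ∈ Ioc (0:ℝ) ε₀, (∀ i j, 0 ≤ p ε i j) ∧ ∀ i, ∑ j, p ε i j = 1)
    (hstoch' : ∀ ε ∈ Ioc (0:ℝ) ε₀, (∀ i j, 0 ≤ ptil ε i j) ∧ ∀ i, ∑ j, ptil ε i j = 1)
    (hB : CondB (fun ε i j => p ε i j))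
    (π : ℝ → Fin m → ℝ)
    (hπ : ∀ᶠ ε in 𝓝[>] (0:ℝ), IsStationaryDist (fun i j => p ε i j) (π ε))
    (hE : ∀ i j, Tendsto (fun ε => p ε i j - ptil ε i j) (𝓝[>] (0:ℝ)) (𝓝 0)) :
    ∃ ε₀'' ∈ Ioc (0:ℝ) ε₀, ∃ πtil : ℝ → Fin m → ℝ,
      (∀ ε ∈ Ioc (0:ℝ) ε₀'', IsErgodicMatrix (ptil ε) ∧
        IsStationaryDist (fun i j => ptil ε i j) (πtil ε)) ∧
      ∀ i, Tendsto (fun ε => π ε i - πtil ε i) (𝓝[>] (0:ℝ)) (𝓝 0) := by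
  classical
  obtain ⟨N, hN, c, hc, hall, hpos⟩ := hB
  have hIoc : ∀ᶠ ε in 𝓝[>] (0:ℝ), ε ∈ Ioc (0:ℝ) ε₀ := Ioc_mem_nhdsGT hε₀
  have hδ : ∀ k, k < N → ∃ δ > 0, ∀ᶠ ε in 𝓝[>] (0:ℝ), δ < p ε (c k) (c (k + 1)) := by
    intro k hk
    obtain ⟨δ, h1, h2⟩ := exists_between (hpos k hk)
    refine ⟨δ, h1, eventually_lt_of_lt_liminf h2 ?_⟩
    exact isBoundedUnder_of_eventually_ge (a := 0)
      (hIoc.mono fun ε h => (hstoch ε h).1 _ _)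
  have hev : ∀ᶠ ε in 𝓝[>] (0:ℝ), ∀ k ∈ Finset.range N, 0 < ptil ε (c k) (c (k + 1)) := by
    rw [Filter.eventually_all_finset]
    intro k hk
    obtain ⟨δ, h1, h2⟩ := hδ k (Finset.mem_range.1 hk)
    filter_upwards [h2, (hE (c k) (c (k + 1))).eventually (gt_mem_nhds h1)] with ε a b
    linarith
  obtain ⟨e, he, hsub⟩ := (mem_nhdsGT_iff_exists_Ioc_subset).1 (hIoc.and hev)
  have he : 0 < e := he
  have hA : ∀ ε ∈ Ioc (0:ℝ) e, ε ∈ Ioc (0:ℝ) ε₀ ∧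
      ∀ k ∈ Finset.range N, 0 < ptil ε (c k) (c (k + 1)) := fun ε h => hsub h
  have hex : ∀ ε, ∃ q : Fin m → ℝ, ε ∈ Ioc (0:ℝ) e → IsStationaryDist (fun i j => ptil ε i j) q := by
    intro ε
    by_cases h : ε ∈ Ioc (0:ℝ) e
    · obtain ⟨h0, h1⟩ := hstoch' ε (hA ε h).1
      obtain ⟨q, hq⟩ := aux_exists hm (ptil ε) h0 h1
      exact ⟨q, fun _ => hq⟩
    · exact ⟨0, fun h' => absurd h' h⟩
  choose πtil hπtil using hex
  refine ⟨e, (hA e ⟨he, le_rfl⟩).1, πtil, fun ε h => ⟨?_, hπtil ε h⟩, fun i => ?_⟩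
  · exact aux_erg _ (hstoch' ε (hA ε h).1).1 (aux_ring _ N hN c hc hall
      fun k hk => (hA ε h).2 k (Finset.mem_range.2 hk))
  · rw [tendsto_iff_ultrafilter]
    intro U hU
    have hπt : ∀ᶠ ε in 𝓝[>] (0:ℝ), IsStationaryDist (fun i j => ptil ε i j) (πtil ε) :=
      Filter.mem_of_superset (Ioc_mem_nhdsGT he) fun ε h => hπtil ε h
    have e1 : ∀ i j, ∃ a, Tendsto (fun ε => p ε i j) U (𝓝 a) := fun i j =>
      aux_lim U _ (hU (hIoc.mono fun ε h => aux_mem _ ((hstoch ε h).1 i) ((hstoch ε h).2 i) j))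
    have e2 : ∀ i, ∃ a, Tendsto (fun ε => π ε i) U (𝓝 a) := fun i =>
      aux_lim U _ (hU (hπ.mono fun ε h => aux_mem _ h.1 h.2.1 i))
    have e3 : ∀ i, ∃ a, Tendsto (fun ε => πtil ε i) U (𝓝 a) := fun i =>
      aux_lim U _ (hU (hπt.mono fun ε h => aux_mem _ h.1 h.2.1 i))
    choose P hP using e1
    choose q hq using e2
    choose r hr using e3
    have hP' : ∀ i j, Tendsto (fun ε => ptil ε i j) U (𝓝 (P i j)) := by
      intro i j
      simpa using (hP i j).sub ((hE i j).mono_left hU)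
    have s1 := aux_limstat U p π P q hP hq (hU hπ)
    have s2 := aux_limstat U ptil πtil P r hP' hr (hU hπt)
    have hP0 : ∀ i j, 0 ≤ P i j := fun i j =>
      ge_of_tendsto (hP i j) (hU (hIoc.mono fun ε h => (hstoch ε h).1 i j))
    have hP1 : ∀ i, ∑ j, P i j = 1 := fun i => by
      refine tendsto_nhds_unique (tendsto_finsetSum _ fun j _ => hP i j) ?_
      exact tendsto_const_nhds.congr' (hU (hIoc.mono fun ε h => ((hstoch ε h).2 i).symm))
    have hPr : ∀ i j, Relation.TransGen (fun i j => 0 < P i j) i j := by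
      refine aux_ring _ N hN c hc hall fun k hk => ?_
      obtain ⟨δ, h1, h2⟩ := hδ k hk
      exact h1.trans_le (ge_of_tendsto (hP _ _) (hU (h2.mono fun ε h => h.le)))
    have hqr : q = r := aux_unique (Matrix.of P) hP0 hP1 hPr q r s1 s2
    have := (hq i).sub (hr i)
    rw [hqr, sub_self] at this
    exact this
end
end

section
/- Suppose condition F holds: p_{ε,ij} → p_{0,ij} as ε → 0 for all i, j ∈ X. Then: (a) the matrix ‖p_{0,ij}‖ is stochastic; (b) condition B holds if and only if the Markov chain η_{0,n} with transition matrix ‖p_{0,ij}‖ is ergodic; and (c) if these equivalent conditions hold, then π_{ε,i} → π_{0,i} as ε → 0 for every i ∈ X, where π_{0,i}, i ∈ X, is the stationary distribution of η_{0,n}. -/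
open MeasureTheory Filter Set
open scoped Topology

noncomputable section

theorem aux_walk {m : ℕ} {P : Matrix (Fin m) (Fin m) ℝ} (h0 : ∀ i j, 0 ≤ P i j) (n : ℕ) :
    ∀ i j, 0 < (P ^ n) i j → ∃ f : ℕ → Fin m, f 0 = i ∧ f n = j ∧
      ∀ k < n, 0 < P (f k) (f (k + 1)) := by
  induction n with
  | zero =>
    intro i j h
    refine ⟨fun _ => i, rfl, ?_, by simp⟩
    by_contra hij
    simp [Matrix.one_apply, hij] at h
  | succ n ih =>
    intro i j h
    rw [pow_succ', Matrix.mul_apply] at h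
    obtain ⟨k, -, hk⟩ := Finset.exists_lt_of_sum_lt (s := Finset.univ) (f := fun _ => (0:ℝ))
      (g := fun k => P i k * (P ^ n) k j) (by simpa using h)
    have h1 : 0 < P i k := by
      rcases (h0 i k).lt_or_eq with h | h
      · exact h
      · simp [← h] at hk
    have h2 : 0 < (P ^ n) k j := (mul_pos_iff_of_pos_left h1).1 hk
    obtain ⟨f, hf0, hfn, hf⟩ := ih k j h2
    refine ⟨fun t => if t = 0 then i else f (t - 1), by simp, by simpa using hfn, ?_⟩
    intro t ht
    rcases t with _ | t
    · simpa [hf0] using h1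
    · simpa using hf t (by omega)

theorem aux_concat {m : ℕ} {P : Matrix (Fin m) (Fin m) ℝ} {a b : ℕ} {f g : ℕ → Fin m}
    (hfg : f a = g 0) (hf : ∀ k < a, 0 < P (f k) (f (k + 1)))
    (hg : ∀ k < b, 0 < P (g k) (g (k + 1))) :
    ∃ c : ℕ → Fin m, (∀ k ≤ a, c k = f k) ∧ (∀ k, c (a + k) = g k) ∧
      ∀ k < a + b, 0 < P (c k) (c (k + 1)) := by
  obtain ⟨c, h1, h2⟩ : ∃ c : ℕ → Fin m, (∀ k ≤ a, c k = f k) ∧ (∀ k, c (a + k) = g k) := by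
    refine ⟨fun k => if k ≤ a then f k else g (k - a), ?_, ?_⟩
    · intro k hk; simp [hk]
    · intro k
      rcases k with _ | k
      · simpa using hfg
      · simp
  refine ⟨c, h1, h2, ?_⟩
  intro k hk
  by_cases hka : k < a
  · rw [h1 k (by omega), h1 (k + 1) (by omega)]
    exact hf k hka
  · obtain ⟨d, rfl⟩ := Nat.exists_eq_add_of_le (not_lt.1 hka)
    rw [add_assoc, h2, h2]
    exact hg d (by omega)

theorem aux_ring_s2 {m : ℕ} {P : Matrix (Fin m) (Fin m) ℝ} (h0 : ∀ i j, 0 ≤ P i j)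
    (hE : IsErgodicMatrix P) (i : Fin m) (S : Finset (Fin m)) :
    ∃ N : ℕ, 0 < N ∧ ∃ c : ℕ → Fin m, c 0 = i ∧ c N = i ∧
      (∀ s ∈ S, ∃ k ≤ N, c k = s) ∧ ∀ k < N, 0 < P (c k) (c (k + 1)) := by
  induction S using Finset.induction_on with
  | empty =>
    obtain ⟨n, hn, h⟩ := hE i i
    obtain ⟨f, h1, h2, h3⟩ := aux_walk h0 n i i h
    exact ⟨n, hn, f, h1, h2, by simp, h3⟩
  | insert a S _ ih =>
    obtain ⟨N, hN, c, hc0, hcN, hS, hc⟩ := ih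
    obtain ⟨n, hn, h⟩ := hE i a
    obtain ⟨f, h1, h2, h3⟩ := aux_walk h0 n i a h
    obtain ⟨n', hn', h'⟩ := hE a i
    obtain ⟨f', h1', h2', h3'⟩ := aux_walk h0 n' a i h'
    obtain ⟨d, d1, d2, d3⟩ := aux_concat (P := P) (h2.trans h1'.symm) h3 h3'
    obtain ⟨e, e1, e2, e3⟩ := aux_concat (P := P) (f := c) (g := d)
      (by rw [hcN, d1 0 (by omega), h1]) hc d3
    refine ⟨N + (n + n'), by omega, e, ?_, ?_, ?_, e3⟩
    · rw [e1 0 (by omega), hc0]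
    · rw [e2, d2, h2']
    · intro s hs
      rcases Finset.mem_insert.1 hs with rfl | hs
      · exact ⟨N + n, by omega, by rw [e2, d1 n le_rfl, h2]⟩
      · obtain ⟨k, hk, rfl⟩ := hS s hs
        exact ⟨k, by omega, e1 k hk⟩

theorem aux_pow_nonneg {m : ℕ} {P : Matrix (Fin m) (Fin m) ℝ} (h0 : ∀ i j, 0 ≤ P i j) (n : ℕ) :
    ∀ i j, 0 ≤ (P ^ n) i j := by
  induction n with
  | zero =>
    intro i j
    rw [pow_zero, Matrix.one_apply]
    split_ifs <;> norm_num
  | succ n ih =>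
    intro i j
    rw [pow_succ, Matrix.mul_apply]
    exact Finset.sum_nonneg fun k _ => mul_nonneg (ih _ _) (h0 _ _)

theorem aux_pow_pos {m : ℕ} {P : Matrix (Fin m) (Fin m) ℝ} (h0 : ∀ i j, 0 ≤ P i j)
    (d : ℕ → Fin m) (hd : ∀ k, 0 < P (d k) (d (k + 1))) (a n : ℕ) :
    0 < (P ^ n) (d a) (d (a + n)) := by
  induction n with
  | zero => simp
  | succ n ih =>
    rw [pow_succ, Matrix.mul_apply]
    refine lt_of_lt_of_le (mul_pos ih (hd (a + n))) ?_
    exact Finset.single_le_sum (f := fun k => (P ^ n) (d a) k * P k (d (a + n + 1)))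
      (fun k _ => mul_nonneg (aux_pow_nonneg h0 n _ _) (h0 _ _)) (Finset.mem_univ (d (a + n)))

theorem aux_ergodic {m : ℕ} {P : Matrix (Fin m) (Fin m) ℝ} (h0 : ∀ i j, 0 ≤ P i j)
    {N : ℕ} (hN : 0 < N) (c : ℕ → Fin m) (hc : c N = c 0)
    (hcov : ∀ i : Fin m, ∃ k ≤ N, c k = i) (hpos : ∀ k < N, 0 < P (c k) (c (k + 1))) :
    IsErgodicMatrix P := by
  have hd : ∀ k, 0 < P (c (k % N)) (c ((k + 1) % N)) := by
    intro k
    have hlt := Nat.mod_lt k hN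
    have key := hpos (k % N) hlt
    have : c ((k + 1) % N) = c (k % N + 1) := by
      rw [← Nat.mod_add_mod]
      rcases Nat.lt_or_ge (k % N + 1) N with h | h
      · rw [Nat.mod_eq_of_lt h]
      · have : k % N + 1 = N := by omega
        rw [this, Nat.mod_self, hc]
    rw [this]; exact key
  have hcov' : ∀ i : Fin m, ∃ k, c (k % N) = i := by
    intro i
    obtain ⟨k, hk, rfl⟩ := hcov i
    rcases hk.lt_or_eq with h | h
    · exact ⟨k, by rw [Nat.mod_eq_of_lt h]⟩
    · exact ⟨0, by rw [h, hc, Nat.zero_mod]⟩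
  intro i j
  obtain ⟨a, rfl⟩ := hcov' i
  obtain ⟨b, rfl⟩ := hcov' j
  have hle : a + 1 ≤ N * (a + 1) := Nat.le_mul_of_pos_left _ hN
  refine ⟨b + N * (a + 1) - a, by omega, ?_⟩
  have := aux_pow_pos h0 (fun k => c (k % N)) hd a (b + N * (a + 1) - a)
  have e : a + (b + N * (a + 1) - a) = b + N * (a + 1) := by omega
  simpa only [e, Nat.add_mul_mod_self_left] using this

theorem aux_zero {m : ℕ} {P : Matrix (Fin m) (Fin m) ℝ} (h0 : ∀ i j, 0 ≤ P i j)
    (hE : IsErgodicMatrix P) (σ : Fin m → ℝ) (hσ : ∀ i, 0 ≤ σ i)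
    (hs : ∀ j, σ j = ∑ i, σ i * P i j) (j : Fin m) (hj : σ j = 0) (i : Fin m) : σ i = 0 := by
  have hn : ∀ n : ℕ, ∀ j, σ j = ∑ i, σ i * (P ^ n) i j := by
    intro n
    have hv : Matrix.vecMul σ P = σ := by
      funext j; rw [Matrix.vecMul, dotProduct]; exact (hs j).symm
    have : Matrix.vecMul σ (P ^ n) = σ := by
      induction n with
      | zero => simp
      | succ n ih => rw [pow_succ, ← Matrix.vecMul_vecMul, ih, hv]
    intro j
    conv_lhs => rw [← this]
    rfl
  obtain ⟨n, -, hp⟩ := hE i j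
  have h1 := hn n j
  rw [hj] at h1
  have h2 := (Finset.sum_eq_zero_iff_of_nonneg
    (fun i _ => mul_nonneg (hσ i) (aux_pow_nonneg h0 n i j))).1 h1.symm i (Finset.mem_univ i)
  exact (mul_eq_zero.1 h2).resolve_right hp.ne'

theorem aux_unique_s2 {m : ℕ} (hm : 0 < m) {P : Matrix (Fin m) (Fin m) ℝ} (h0 : ∀ i j, 0 ≤ P i j)
    (hE : IsErgodicMatrix P) (μ ν : Fin m → ℝ) (hμ : IsStationaryDist (fun i j => P i j) μ)
    (hν : IsStationaryDist (fun i j => P i j) ν) : μ = ν := by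
  obtain ⟨m0, m1, m2⟩ := hμ
  obtain ⟨n0, n1, n2⟩ := hν
  have hpos : ∀ i, 0 < ν i := by
    intro i
    rcases (n0 i).lt_or_eq with h | h
    · exact h
    · have hz := aux_zero h0 hE ν n0 n2 i h.symm
      simp [hz] at n1
  haveI : Nonempty (Fin m) := ⟨⟨0, hm⟩⟩
  obtain ⟨k, hk⟩ := Finite.exists_min (fun i => μ i / ν i)
  have hz := aux_zero h0 hE (fun i => μ i - μ k / ν k * ν i)
    (fun i => by
      have := (le_div_iff₀ (hpos i)).1 (hk i)
      simpa using this)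
    (fun j => by
      simp only [sub_mul, Finset.sum_sub_distrib, mul_assoc, ← Finset.mul_sum]
      rw [← m2 j, ← n2 j]) k
    (by have := (hpos k).ne'
        field_simp
        simp)
  have he : ∀ i, μ i = μ k / ν k * ν i := fun i => sub_eq_zero.1 (hz i)
  have ht : μ k / ν k = 1 := by
    have : ∑ i, μ i = ∑ i, μ k / ν k * ν i := Finset.sum_congr rfl fun i _ => he i
    rw [← Finset.mul_sum, m1, n1, mul_one] at this
    exact this.symm
  funext i
  rw [he i, ht, one_mul]

/-- Lemma 1 (iii): under condition F, the limit matrix is stochastic,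
condition B is equivalent to ergodicity of the limit chain, and in that case the
stationary distributions converge. -/
theorem stmt2 {m : ℕ} (hm : 0 < m) (ε₀ : ℝ) (hε₀ : 0 < ε₀)
    (p : ℝ → Matrix (Fin m) (Fin m) ℝ) (p0 : Matrix (Fin m) (Fin m) ℝ)
    (hstoch : ∀ ε ∈ Ioc (0:ℝ) ε₀, (∀ i j, 0 ≤ p ε i j) ∧ ∀ i, ∑ j, p ε i j = 1)
    (hF : ∀ i j, Tendsto (fun ε => p ε i j) (𝓝[>] (0:ℝ)) (𝓝 (p0 i j))) :
    ((∀ i j, 0 ≤ p0 i j) ∧ ∀ i, ∑ j, p0 i j = 1) ∧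
    (CondB (fun ε i j => p ε i j) ↔ IsErgodicMatrix p0) ∧
    (CondB (fun ε i j => p ε i j) →
      ∀ π : ℝ → Fin m → ℝ, (∀ᶠ ε in 𝓝[>] (0:ℝ), IsStationaryDist (fun i j => p ε i j) (π ε)) →
      ∀ π0 : Fin m → ℝ, IsStationaryDist (fun i j => p0 i j) π0 →
      ∀ i, Tendsto (fun ε => π ε i) (𝓝[>] (0:ℝ)) (𝓝 (π0 i))) := by
  have hev : ∀ᶠ ε in 𝓝[>] (0:ℝ), ε ∈ Ioc (0:ℝ) ε₀ := Ioc_mem_nhdsGT hε₀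
  have h0 : ∀ i j, 0 ≤ p0 i j := fun i j =>
    ge_of_tendsto (hF i j) (hev.mono fun ε hε => (hstoch ε hε).1 i j)
  have hB : CondB (fun ε i j => p ε i j) ↔ IsErgodicMatrix p0 := by
    have hl : ∀ i j, Filter.liminf (fun ε => p ε i j) (𝓝[>] (0 : ℝ)) = p0 i j :=
      fun i j => (hF i j).liminf_eq
    constructor
    · rintro ⟨N, hN, c, hc, hcov, hpos⟩
      simp only [hl] at hpos
      exact aux_ergodic h0 hN c hc hcov hpos
    · intro hE
      obtain ⟨N, hN, c, c0, cN, hcov, hpos⟩ := aux_ring_s2 h0 hE ⟨0, hm⟩ Finset.univ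
      refine ⟨N, hN, c, cN.trans c0.symm, fun i => hcov i (Finset.mem_univ i), ?_⟩
      simpa only [hl] using hpos
  refine ⟨⟨h0, fun i => ?_⟩, hB, ?_⟩
  · have h1 : Tendsto (fun ε => ∑ j, p ε i j) (𝓝[>] (0:ℝ)) (𝓝 (∑ j, p0 i j)) :=
      tendsto_finsetSum _ fun j _ => hF i j
    have h2 : Tendsto (fun ε => ∑ j, p ε i j) (𝓝[>] (0:ℝ)) (𝓝 1) :=
      tendsto_const_nhds.congr' (hev.mono fun ε hε => ((hstoch ε hε).2 i).symm)
    exact tendsto_nhds_unique h1 h2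
  · intro hb π hπ π0 hπ0
    have hE := hB.1 hb
    suffices h : Tendsto π (𝓝[>] (0:ℝ)) (𝓝 π0) from fun i => (tendsto_pi_nhds.1 h) i
    rw [tendsto_iff_ultrafilter]
    intro g hg
    have hπg : ∀ᶠ ε in (g : Filter ℝ), IsStationaryDist (fun i j => p ε i j) (π ε) := hg hπ
    have hmem : ∀ᶠ ε in (g : Filter ℝ), π ε ∈ stdSimplex ℝ (Fin m) :=
      hπg.mono fun ε h => ⟨h.1, h.2.1⟩
    obtain ⟨x, hx, hgx⟩ := (isCompact_stdSimplex ℝ (Fin m)).ultrafilter_le_nhds (g.map π)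
      (le_principal_iff.2 hmem)
    have hx' : Tendsto π (g : Filter ℝ) (𝓝 x) := hgx
    have hxi := tendsto_pi_nhds.1 hx'
    have hst : IsStationaryDist (fun i j => p0 i j) x := by
      refine ⟨hx.1, hx.2, fun j => ?_⟩
      have h1 : Tendsto (fun ε => ∑ i, π ε i * p ε i j) (g : Filter ℝ)
          (𝓝 (∑ i, x i * p0 i j)) :=
        tendsto_finsetSum _ fun i _ => (hxi i).mul ((hF i j).mono_left hg)
      exact tendsto_nhds_unique ((hxi j).congr' (hπg.mono fun ε h => h.2.2 j)) h1
    rw [← aux_unique_s2 hm h0 hE x π0 hst hπ0]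
    exact hx'
end
end

section
/- Let condition B hold, let v_ε, ε ∈ (0, ε₀], be positive numbers with v_ε → ∞ as ε → 0, and suppose condition D₁ holds. Then, for any family of initial distributions q̄_ε, the random variables κ_ε(1) = Σ_{n=1}^{[v_ε]} κ_{ε,n} converge in distribution as ε → 0 to a nonnegative random variable θ₀ whose distribution is infinitely divisible, not concentrated at zero, and has Laplace transform E e^{−sθ₀} = e^{−A(s)} for s ≥ 0. -/
open MeasureTheory Filter Set
open scoped Topology ENNReal

noncomputable section

lemma path_pi {m : ℕ} (E : Fin m → Fin m → Prop) (δ : ℝ) (hδ : 0 < δ) (i j : Fin m)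
    (h : Relation.ReflTransGen E i j) :
    ∃ c : ℝ, 0 < c ∧ ∀ (p : Fin m → Fin m → ℝ) (π : Fin m → ℝ), (∀ i j, 0 ≤ p i j) →
      (∀ a b, E a b → δ ≤ p a b) → IsStationaryDist p π → c * π i ≤ π j := by
  induction h with
  | refl => exact ⟨1, one_pos, fun p π _ _ _ => by simp⟩
  | @tail b d _ hbc ih =>
    obtain ⟨c, hc, ih⟩ := ih
    refine ⟨c * δ, by positivity, fun p π hp hE hπ => ?_⟩
    have h1 := ih p π hp hE hπ
    have h2 : π b * p b d ≤ π d := by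
      rw [hπ.2.2 d]
      exact Finset.single_le_sum (f := fun i => π i * p i d)
        (fun i _ => mul_nonneg (hπ.1 i) (hp i d)) (Finset.mem_univ b)
    have h3 := hE b d hbc
    have h4 := hπ.1 b
    nlinarith [mul_le_mul_of_nonneg_left h3 h4]

lemma path_osc {m : ℕ} (E : Fin m → Fin m → Prop) (δ : ℝ) (hδ : 0 < δ) (i j : Fin m)
    (h : Relation.ReflTransGen E i j) :
    ∃ C : ℝ, 0 ≤ C ∧ ∀ (p : Fin m → Fin m → ℝ) (g : Fin m → ℝ) (F : ℝ), (∀ i j, 0 ≤ p i j) →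
      (∀ i, ∑ j, p i j = 1) →
      (∀ a b, E a b → δ ≤ p a b) → (∀ i, |g i - ∑ j, p i j * g j| ≤ F) →
      (∀ k, g k ≤ g i) → g i - g j ≤ C * F := by
  induction h with
  | refl => exact ⟨0, le_rfl, fun p g F _ _ _ _ _ => by simp⟩
  | @tail b d _ hbc ih =>
    obtain ⟨C, hC, ih⟩ := ih
    refine ⟨(C + 1) / δ, by positivity, fun p g F hp hs hE hg hmax => ?_⟩
    have h1 := ih p g F hp hs hE hg hmax
    have h2 : p b d * (g i - g d) ≤ ∑ j, p b j * (g i - g j) :=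
      Finset.single_le_sum (f := fun j => p b j * (g i - g j))
        (fun j _ => mul_nonneg (hp b j) (sub_nonneg.2 (hmax j))) (Finset.mem_univ d)
    have h3 : ∑ j, p b j * (g i - g j) = g i - ∑ j, p b j * g j := by
      simp only [mul_sub, Finset.sum_sub_distrib, ← Finset.sum_mul, hs, one_mul]
    have h4 := (abs_le.1 (hg b)).2
    have h5 := hE b d hbc
    have h6 := hmax d
    rw [div_mul_eq_mul_div, le_div_iff₀ hδ]
    nlinarith [mul_le_mul_of_nonneg_right h5 (sub_nonneg.2 h6)]

/-- uniform graph constants -/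
lemma graph_const {m : ℕ} (hm : 0 < m) (E : Fin m → Fin m → Prop) (δ : ℝ) (hδ : 0 < δ)
    (hE : ∀ i j, Relation.ReflTransGen E i j) :
    ∃ C : ℝ, 1 ≤ C ∧ ∀ p : Fin m → Fin m → ℝ, (∀ i j, 0 ≤ p i j) → (∀ i, ∑ j, p i j = 1) →
      (∀ a b, E a b → δ ≤ p a b) →
      (∀ π, IsStationaryDist p π → ∀ i, 1 ≤ C * π i) ∧
      (∀ (g : Fin m → ℝ) (F : ℝ), (∀ i, |g i - ∑ j, p i j * g j| ≤ F) →
        ∀ i j, g i - g j ≤ C * F) := by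
  have : Nonempty (Fin m) := ⟨⟨0, hm⟩⟩
  choose c hc hc' using fun i j => path_pi E δ hδ i j (hE i j)
  choose K hK hK' using fun i j => path_osc E δ hδ i j (hE i j)
  have hKle : ∀ i j, K i j ≤ ∑ i, ∑ j, K i j := fun i j =>
    (Finset.single_le_sum (f := fun j => K i j) (fun j _ => hK i j) (Finset.mem_univ j)).trans
      (Finset.single_le_sum (f := fun i => ∑ j, K i j)
        (fun i _ => Finset.sum_nonneg fun j _ => hK i j) (Finset.mem_univ i))
  have hcle : ∀ j, ∑ i, (c i j)⁻¹ ≤ ∑ j, ∑ i, (c i j)⁻¹ := fun j =>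
      (Finset.single_le_sum (f := fun j => ∑ i, (c i j)⁻¹)
        (fun j _ => Finset.sum_nonneg fun i _ => (inv_pos.2 (hc i j)).le) (Finset.mem_univ j))
  have hK0 : 0 ≤ ∑ i, ∑ j, K i j := Finset.sum_nonneg fun i _ => Finset.sum_nonneg fun j _ => hK i j
  have hc0 : 0 ≤ ∑ j, ∑ i, (c i j)⁻¹ :=
    Finset.sum_nonneg fun j _ => Finset.sum_nonneg fun i _ => (inv_pos.2 (hc i j)).le
  refine ⟨1 + ∑ i, ∑ j, K i j + ∑ j, ∑ i, (c i j)⁻¹, by linarith, fun p hp hs hpE => ⟨?_, ?_⟩⟩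
  · intro π hπ j
    have h1 : ∑ i, π i ≤ ∑ i, (c i j)⁻¹ * π j := by
      refine Finset.sum_le_sum fun i _ => ?_
      rw [inv_mul_eq_div, le_div_iff₀ (hc i j), mul_comm]
      exact hc' i j p π hp hpE hπ
    rw [hπ.2.1, ← Finset.sum_mul] at h1
    refine h1.trans (mul_le_mul_of_nonneg_right ?_ (hπ.1 j))
    linarith [hcle j]
  · intro g F hg i j
    obtain ⟨i₀, hi₀⟩ := Finite.exists_max g
    have hF : 0 ≤ F := (abs_nonneg _).trans (hg i)
    have h1 := hK' i₀ j p g F hp hs hpE hg hi₀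
    have h2 := hi₀ i
    have h3 := hKle i₀ j
    nlinarith [mul_le_mul_of_nonneg_right h3 hF]

lemma poisson {m : ℕ} (C : ℝ) (p : Fin m → Fin m → ℝ) 
    (hs : ∀ i, ∑ j, p i j = 1) (π : Fin m → ℝ) (hπ : IsStationaryDist p π)
    (hosc : ∀ (g : Fin m → ℝ) (F : ℝ), (∀ i, |g i - ∑ j, p i j * g j| ≤ F) →
        ∀ i j, g i - g j ≤ C * F)
    (f : Fin m → ℝ) (hf : ∑ i, π i * f i = 0) (F : ℝ) (hF : ∀ i, |f i| ≤ F) :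
    ∃ h : Fin m → ℝ, (∀ i, ∑ j, p i j * h j - h i = f i) ∧ ∀ i, |h i| ≤ C * F := by
  have hinv : ∀ h : Fin m → ℝ, ∑ i, π i * (∑ j, p i j * h j) = ∑ i, π i * h i := by
    intro h
    simp only [Finset.mul_sum]
    rw [Finset.sum_comm]
    refine Finset.sum_congr rfl fun j _ => ?_
    rw [hπ.2.2 j, Finset.sum_mul]
    exact Finset.sum_congr rfl fun i _ => by ring
  let T : (Fin m → ℝ) →ₗ[ℝ] (Fin m → ℝ) :=
    { toFun := fun h i => (∑ j, p i j * h j) - h i + ∑ j, π j * h j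
      map_add' := by
        intro x y; ext i
        simp only [Pi.add_apply, mul_add, Finset.sum_add_distrib]; ring
      map_smul' := by
        intro a x; ext i
        simp only [Pi.smul_apply, smul_eq_mul, RingHom.id_apply, mul_add, mul_sub, Finset.mul_sum]
        congr 1
        · congr 1
          exact Finset.sum_congr rfl fun j _ => by ring
        · exact Finset.sum_congr rfl fun j _ => by ring }
  have hT : ∀ h i, T h i = (∑ j, p i j * h j) - h i + ∑ j, π j * h j := fun _ _ => rfl
  have hπT : ∀ h, ∑ i, π i * T h i = ∑ i, π i * h i := by
    intro h
    simp only [hT, mul_add, mul_sub, Finset.sum_add_distrib, Finset.sum_sub_distrib, hinv,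
      ← Finset.sum_mul, hπ.2.1]
    ring
  have hinj : Function.Injective T := by
    rw [injective_iff_map_eq_zero]
    intro h hh
    have h0 : ∑ i, π i * h i = 0 := by rw [← hπT h, hh]; simp
    have h1 : ∀ i, |h i - ∑ j, p i j * h j| ≤ 0 := by
      intro i
      have := hT h i
      rw [hh, h0] at this
      simp only [Pi.zero_apply] at this
      rw [show h i - ∑ j, p i j * h j = 0 by linarith]; simp
    have h2 := hosc h 0 h1
    ext i
    have h3 : ∀ j, h j = h i := fun j => le_antisymm (by linarith [h2 j i]) (by linarith [h2 i j])
    simp only [h3, ← Finset.sum_mul, hπ.2.1] at h0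
    simpa using h0
  obtain ⟨h, hh⟩ := (LinearMap.injective_iff_surjective.1 hinj) f
  have h0 : ∑ i, π i * h i = 0 := by rw [← hπT h, hh, hf]
  have h1 : ∀ i, ∑ j, p i j * h j - h i = f i := by
    intro i; have := hT h i; rw [hh, h0] at this; linarith
  refine ⟨h, h1, ?_⟩
  have h2 := hosc h F (fun i => by
    rw [abs_sub_comm, h1]; exact hF i)
  intro i
  have e1 : ∑ j, π j * (h i - h j) = h i := by
    simp only [mul_sub, Finset.sum_sub_distrib, h0, ← Finset.sum_mul, hπ.2.1]; ring
  have e2 : ∑ j, π j * (C * F) = C * F := by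
    rw [← Finset.sum_mul, hπ.2.1, one_mul]
  rw [abs_le]
  constructor
  · have : ∑ j, π j * (-(C * F)) ≤ ∑ j, π j * (h i - h j) :=
      Finset.sum_le_sum fun j _ => mul_le_mul_of_nonneg_left (by linarith [h2 j i]) (hπ.1 j)
    rw [e1, ← Finset.sum_mul, hπ.2.1, one_mul] at this
    exact this
  · have : ∑ j, π j * (h i - h j) ≤ ∑ j, π j * (C * F) :=
      Finset.sum_le_sum fun j _ => mul_le_mul_of_nonneg_left (by linarith [h2 i j]) (hπ.1 j)
    rw [e1, e2] at this
    exact this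

def uIter {m : ℕ} (φ : Fin m → Fin m → ℝ) : ℕ → Fin m → ℝ
  | 0 => fun _ => 1
  | n + 1 => fun i => ∑ j, φ i j * uIter φ n j

lemma main_bound {m : ℕ} (C : ℝ) (hC : 1 ≤ C) (p φ : Fin m → Fin m → ℝ)
    (hφ0 : ∀ i j, 0 ≤ φ i j) (hφp : ∀ i j, φ i j ≤ p i j)
    (hs : ∀ i, ∑ j, p i j = 1) (π : Fin m → ℝ) (hπ : IsStationaryDist p π)
    (hπC : ∀ i, 1 ≤ C * π i)
    (hosc : ∀ (g : Fin m → ℝ) (F : ℝ), (∀ i, |g i - ∑ j, p i j * g j| ≤ F) →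
        ∀ i j, g i - g j ≤ C * F)
    (a : ℝ) (ha : a = 1 - ∑ i, π i * ∑ j, φ i j) (n : ℕ) (i : Fin m) :
    |uIter φ n i - Real.exp (-(n * a))| ≤ 4 * C ^ 3 * (a + n * a ^ 2) := by
  set d : Fin m → ℝ := fun i => 1 - ∑ j, φ i j with hd
  have hd0 : ∀ i, 0 ≤ d i := fun i => by
    have : ∑ j, φ i j ≤ ∑ j, p i j := Finset.sum_le_sum fun j _ => hφp i j
    rw [hs] at this; simp only [hd]; linarith
  have had : a = ∑ i, π i * d i := by
    simp only [hd, mul_sub, Finset.sum_sub_distrib, mul_one, hπ.2.1, ha]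
  have ha0 : 0 ≤ a := had ▸ Finset.sum_nonneg fun i _ => mul_nonneg (hπ.1 i) (hd0 i)
  have ha1 : a ≤ 1 := by
    rw [ha]
    have : 0 ≤ ∑ i, π i * ∑ j, φ i j := Finset.sum_nonneg fun i _ =>
      mul_nonneg (hπ.1 i) (Finset.sum_nonneg fun j _ => hφ0 i j)
    linarith
  have hdC : ∀ i, d i ≤ C * a := fun i => by
    have h1 : π i * d i ≤ a := by
      rw [had]
      exact Finset.single_le_sum (f := fun i => π i * d i)
        (fun i _ => mul_nonneg (hπ.1 i) (hd0 i)) (Finset.mem_univ i)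
    nlinarith [mul_le_mul_of_nonneg_right (hπC i) (hd0 i)]
  obtain ⟨h, hh, hhC⟩ := poisson C p hs π hπ hosc (fun i => d i - a)
    (by simp only [mul_sub, Finset.sum_sub_distrib, ← had, ← Finset.sum_mul, hπ.2.1]; ring)
    (C * a) (fun i => by
      rw [abs_le]; constructor <;> nlinarith [hd0 i, hdC i])
  set H := C * (C * a) with hH
  have hH0 : 0 ≤ H := by positivity
  -- residual
  have hres : ∀ i, |∑ j, φ i j * (1 + h j) - (1 - a) * (1 + h i)| ≤ 2 * C * a * H := by
    intro i
    have e : ∑ j, φ i j * (1 + h j) - (1 - a) * (1 + h i)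
        = a * h i - ∑ j, (p i j - φ i j) * h j := by
      have := hh i
      simp only [hd] at this
      simp only [mul_add, sub_mul, Finset.sum_add_distrib, Finset.sum_sub_distrib, mul_one]
      linarith
    have e2 : |∑ j, (p i j - φ i j) * h j| ≤ d i * H := by
      have : d i * H = ∑ j, (p i j - φ i j) * H := by
        rw [← Finset.sum_mul, Finset.sum_sub_distrib, hs]
      rw [this]
      refine (Finset.abs_sum_le_sum_abs _ _).trans (Finset.sum_le_sum fun j _ => ?_)
      rw [abs_mul, abs_of_nonneg (sub_nonneg.2 (hφp i j))]
      exact mul_le_mul_of_nonneg_left (hhC j) (sub_nonneg.2 (hφp i j))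
    rw [e]
    refine (abs_sub _ _).trans ?_
    rw [abs_mul, abs_of_nonneg ha0]
    have e3 := mul_le_mul_of_nonneg_left (hhC i) ha0
    have e4 := mul_le_mul_of_nonneg_right (hdC i) hH0
    have e5 : a * H ≤ C * a * H := by nlinarith [mul_nonneg ha0 hH0]
    linarith
  have hl0 : 0 ≤ 1 - a := by linarith
  have hl1 : 1 - a ≤ 1 := by linarith
  have hind : ∀ n : ℕ, ∀ i, |uIter φ n i - (1 - a) ^ n * (1 + h i)| ≤ H + n * (2 * C * a * H) := by
    intro n
    induction n with
    | zero => intro i; simpa [uIter] using hhC i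
    | succ n ih =>
      intro i
      have hR : 0 ≤ H + n * (2 * C * a * H) := by positivity
      have e : uIter φ (n + 1) i - (1 - a) ^ (n + 1) * (1 + h i)
          = ∑ j, φ i j * (uIter φ n j - (1 - a) ^ n * (1 + h j))
            + (1 - a) ^ n * (∑ j, φ i j * (1 + h j) - (1 - a) * (1 + h i)) := by
        simp only [uIter, mul_sub, Finset.sum_sub_distrib, Finset.mul_sum]
        have : ∑ x, φ i x * ((1 - a) ^ n * (1 + h x)) = ∑ x, (1 - a) ^ n * (φ i x * (1 + h x)) :=
          Finset.sum_congr rfl fun j _ => by ring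
        rw [this]; ring
      rw [e]
      refine (abs_add_le _ _).trans ?_
      have e1 : |∑ j, φ i j * (uIter φ n j - (1 - a) ^ n * (1 + h j))|
          ≤ H + n * (2 * C * a * H) := by
        refine (Finset.abs_sum_le_sum_abs _ _).trans ?_
        calc _ ≤ ∑ j, p i j * (H + n * (2 * C * a * H)) := by
              refine Finset.sum_le_sum fun j _ => ?_
              rw [abs_mul, abs_of_nonneg (hφ0 i j)]
              exact mul_le_mul (hφp i j) (ih j) (abs_nonneg _) ((hφ0 i j).trans (hφp i j))
          _ = _ := by rw [← Finset.sum_mul, hs, one_mul]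
      have e2 : |(1 - a) ^ n * (∑ j, φ i j * (1 + h j) - (1 - a) * (1 + h i))|
          ≤ 2 * C * a * H := by
        rw [abs_mul, abs_of_nonneg (pow_nonneg hl0 n)]
        calc _ ≤ 1 * (2 * C * a * H) :=
              mul_le_mul (pow_le_one₀ hl0 hl1) (hres i) (abs_nonneg _) zero_le_one
          _ = _ := one_mul _
      push_cast
      linarith
  have h1 := hind n i
  have h2 : |(1 - a) ^ n * (1 + h i) - (1 - a) ^ n| ≤ H := by
    rw [show (1 - a) ^ n * (1 + h i) - (1 - a) ^ n = (1 - a) ^ n * h i by ring, abs_mul,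
      abs_of_nonneg (pow_nonneg hl0 n)]
    calc _ ≤ 1 * H := mul_le_mul (pow_le_one₀ hl0 hl1) (hhC i) (abs_nonneg _) zero_le_one
      _ = _ := one_mul _
  have hea : |(1 - a) - Real.exp (-a)| ≤ a ^ 2 := by
    have := Real.abs_exp_sub_one_sub_id_le (x := -a) (by rw [abs_neg, abs_of_nonneg ha0]; exact ha1)
    rw [abs_sub_comm]
    rw [neg_sq] at this
    convert this using 2; ring
  have h3 : |(1 - a) ^ n - Real.exp (-(n * a))| ≤ n * a ^ 2 := by
    have hexp : Real.exp (-(n * a)) = Real.exp (-a) ^ n := by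
      rw [← Real.exp_nat_mul]; congr 1; ring
    rw [hexp]
    have hx0 := (Real.exp_pos (-a)).le
    have hx1 : Real.exp (-a) ≤ 1 := Real.exp_le_one_iff.2 (by linarith)
    clear h1 h2 hexp
    induction n with
    | zero => simp
    | succ n ih =>
      rw [show (1 - a) ^ (n + 1) - Real.exp (-a) ^ (n + 1)
        = (1 - a) * ((1 - a) ^ n - Real.exp (-a) ^ n)
          + ((1 - a) - Real.exp (-a)) * Real.exp (-a) ^ n by ring]
      refine (abs_add_le _ _).trans ?_
      rw [abs_mul, abs_mul, abs_of_nonneg hl0, abs_of_nonneg (pow_nonneg hx0 n)]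
      have q1 := mul_le_mul hl1 ih (abs_nonneg _) zero_le_one
      have q2 := mul_le_mul hea (pow_le_one₀ (n := n) hx0 hx1) (pow_nonneg hx0 n) (sq_nonneg a)
      push_cast
      linarith
  have h4 := abs_sub_le (uIter φ n i) ((1 - a) ^ n * (1 + h i)) ((1 - a) ^ n)
  have h5 := abs_sub_le (uIter φ n i) ((1 - a) ^ n) (Real.exp (-(n * a)))
  have hC2 : C ^ 2 ≤ C ^ 3 := pow_le_pow_right₀ hC (by norm_num)
  have hC1 : 1 ≤ C ^ 3 := one_le_pow₀ hC
  have hna : (0:ℝ) ≤ n * a ^ 2 := by positivity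
  have e1 : n * (2 * C * a * H) = 2 * C ^ 3 * (n * a ^ 2) := by rw [hH]; ring
  have e2 : H = C ^ 2 * a := by rw [hH]; ring
  rw [e1] at h1
  rw [e2] at h1 h2
  have := mul_le_mul_of_nonneg_right hC2 ha0
  have := mul_le_mul_of_nonneg_right hC1 hna
  nlinarith

lemma tendsto_u (l : Filter ℝ) (v a : ℝ → ℝ) (u : ℝ → ℝ) (A r K : ℝ) (hr : 0 < r)
    (hv : Tendsto v l atTop) (ha : Tendsto (fun ε => v ε * a ε) l (𝓝 A))
    (hu : ∀ᶠ ε in l, |u ε - Real.exp (-((⌊r * v ε⌋₊ : ℝ) * a ε))|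
      ≤ K * (a ε + (⌊r * v ε⌋₊ : ℝ) * a ε ^ 2)) :
    Tendsto u l (𝓝 (Real.exp (-(r * A)))) := by
  have hvi : Tendsto (fun ε => (v ε)⁻¹) l (𝓝 0) := tendsto_inv_atTop_zero.comp hv
  have hv0 : ∀ᶠ ε in l, 0 < v ε := hv.eventually_gt_atTop 0
  have ha0 : Tendsto a l (𝓝 0) := by
    have := hvi.mul ha
    rw [zero_mul] at this
    refine this.congr' ?_
    filter_upwards [hv0] with ε h
    field_simp
  have hrv : Tendsto (fun ε => r * v ε) l atTop := hv.const_mul_atTop hr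
  have hfl : Tendsto (fun ε => (⌊r * v ε⌋₊ : ℝ) / (r * v ε)) l (𝓝 1) :=
    (tendsto_nat_floor_div_atTop).comp hrv
  have hka : Tendsto (fun ε => (⌊r * v ε⌋₊ : ℝ) * a ε) l (𝓝 (r * A)) := by
    have := (hfl.mul (ha.const_mul r))
    rw [one_mul] at this
    refine this.congr' ?_
    filter_upwards [hv0] with ε h
    field_simp
  have hexp : Tendsto (fun ε => Real.exp (-((⌊r * v ε⌋₊ : ℝ) * a ε))) l
      (𝓝 (Real.exp (-(r * A)))) := (Real.continuous_exp.tendsto _).comp hka.neg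
  have hb : Tendsto (fun ε => K * (a ε + (⌊r * v ε⌋₊ : ℝ) * a ε ^ 2)) l (𝓝 0) := by
    have := (ha0.add (hka.mul ha0)).const_mul K
    simp only [mul_zero, add_zero] at this
    refine this.congr fun ε => by ring
  have hd : Tendsto (fun ε => u ε - Real.exp (-((⌊r * v ε⌋₊ : ℝ) * a ε))) l (𝓝 0) :=
    squeeze_zero_norm' hu hb
  have := hd.add hexp
  simpa using this

lemma integrable_exp_neg {α : Type*} [MeasurableSpace α] (μ : Measure α) [IsFiniteMeasure μ]
    (f : α → ℝ) (hf : Measurable f) (s : ℝ) (hs : 0 < s) (h0 : ∀ᵐ x ∂μ, 0 ≤ f x) :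
    Integrable (fun x => Real.exp (-(s * f x))) μ := by
  refine Integrable.of_bound (C := 1) (by fun_prop) ?_
  filter_upwards [h0] with x hx
  rw [Real.norm_eq_abs, abs_of_pos (Real.exp_pos _)]
  exact Real.exp_le_one_iff.2 (by nlinarith [mul_nonneg hs.le hx])

lemma laplace_tail (μ : Measure ℝ) [IsProbabilityMeasure μ] (hμ : μ (Iio 0) = 0) (x : ℝ)
    (hx : 0 < x) : μ.real {y | x < ‖y‖} ≤ 2 * (1 - ∫ y, Real.exp (-(x⁻¹ * y)) ∂μ) := by
  have hae : ∀ᵐ y ∂μ, 0 ≤ y := by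
    rw [ae_iff]; simpa [Iio] using hμ
  have hi := integrable_exp_neg μ (fun y => y) measurable_id x⁻¹ (inv_pos.2 hx) hae
  have hms : MeasurableSet {y : ℝ | x < ‖y‖} := measurableSet_lt measurable_const measurable_norm
  have h1 : ∫ y, (1 - Real.exp (-(x⁻¹ * y))) ∂μ = 1 - ∫ y, Real.exp (-(x⁻¹ * y)) ∂μ := by
    rw [integral_sub (integrable_const _) hi]; simp
  rw [← h1, ← integral_const_mul, ← integral_indicator_one hms]
  refine integral_mono_ae ((integrable_const (1:ℝ)).indicator hms)
    (((integrable_const _).sub hi).const_mul 2) ?_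
  filter_upwards [hae] with y hy
  have e1 : Real.exp (-(x⁻¹ * y)) ≤ 1 := Real.exp_le_one_iff.2 (by
    have := mul_nonneg (inv_pos.2 hx).le hy; linarith)
  by_cases h : x < ‖y‖
  · have h' : x < y := by rwa [Real.norm_eq_abs, abs_of_nonneg hy] at h
    have e2 : Real.exp (-(x⁻¹ * y)) ≤ 1 / 2 := by
      have : 1 ≤ x⁻¹ * y := by
        rw [inv_mul_eq_div, le_div_iff₀ hx]; linarith
      have h3 : Real.exp (-(x⁻¹ * y)) ≤ Real.exp (-1) := Real.exp_le_exp.2 (by linarith)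
      have h4 : Real.exp (-1) ≤ 1 / 2 := by
        rw [Real.exp_neg, one_div]
        refine inv_anti₀ (by norm_num) ?_
        have := Real.add_one_le_exp 1; linarith
      linarith
    simp only [indicator, mem_ofPred_eq, h, if_true, Pi.one_apply]
    linarith
  · simp only [indicator, mem_ofPred_eq, h, if_false]
    linarith

/-- continuity theorem for Laplace transforms -/
lemma laplace_limit (μ : ℕ → Measure ℝ) [hμp : ∀ n, IsProbabilityMeasure (μ n)]
    (hμ0 : ∀ n, μ n (Iio 0) = 0) (B : ℝ → ℝ)
    (hlim : ∀ s > 0, Tendsto (fun n => ∫ y, Real.exp (-(s * y)) ∂(μ n)) atTop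
      (𝓝 (Real.exp (-(B s)))))
    (hB : Tendsto B (𝓝[>] 0) (𝓝 0)) :
    ∃ ν : Measure ℝ, IsProbabilityMeasure ν ∧ ν (Iio 0) = 0 ∧
      ∀ s > 0, ∫ y, Real.exp (-(s * y)) ∂ν = Real.exp (-(B s)) := by
  have htight : IsTightMeasureSet (Set.range μ) := by
    refine isTightMeasureSet_range_of_tendsto_limsup_measure_norm_gt ?_
    have hg : Tendsto (fun x : ℝ => ENNReal.ofReal (2 * (1 - Real.exp (-(B x⁻¹))))) atTop (𝓝 0) := by
      have h1 : Tendsto (fun x : ℝ => B x⁻¹) atTop (𝓝 0) := hB.comp tendsto_inv_atTop_nhdsGT_zero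
      have h2 : Tendsto (fun x : ℝ => 2 * (1 - Real.exp (-(B x⁻¹)))) atTop
          (𝓝 (2 * (1 - Real.exp (-0)))) :=
        ((((Real.continuous_exp.tendsto _).comp h1.neg)).const_sub 1).const_mul 2
      have := ENNReal.tendsto_ofReal h2
      simpa using this
    refine tendsto_of_tendsto_of_tendsto_of_le_of_le' tendsto_const_nhds hg
      (Eventually.of_forall fun _ => zero_le) ?_
    filter_upwards [eventually_gt_atTop 0] with x hx
    have h3 : Tendsto (fun n => ENNReal.ofReal (2 * (1 - ∫ y, Real.exp (-(x⁻¹ * y)) ∂(μ n)))) atTop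
        (𝓝 (ENNReal.ofReal (2 * (1 - Real.exp (-(B x⁻¹)))))) :=
      ENNReal.tendsto_ofReal (((hlim x⁻¹ (inv_pos.2 hx)).const_sub 1).const_mul 2)
    rw [← h3.limsup_eq]
    refine limsup_le_limsup (Eventually.of_forall fun n => ?_)
    have := laplace_tail (μ n) (hμ0 n) x hx
    change μ n _ ≤ ENNReal.ofReal _
    rw [← ofReal_measureReal (measure_ne_top _ _)]
    exact ENNReal.ofReal_le_ofReal this
  let μ' : ℕ → ProbabilityMeasure ℝ := fun n => ⟨μ n, hμp n⟩
  have hc : IsCompact (closure (Set.range μ')) := by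
    refine isCompact_closure_of_isTightMeasureSet ?_
    convert htight using 1
    ext ρ; constructor
    · rintro ⟨_, ⟨n, rfl⟩, rfl⟩; exact ⟨n, rfl⟩
    · rintro ⟨n, rfl⟩; exact ⟨μ' n, ⟨n, rfl⟩, rfl⟩
  obtain ⟨ν, -, ψ, hψ, hν⟩ := hc.tendsto_subseq (x := μ') (fun n => subset_closure ⟨n, rfl⟩)
  have hae : ∀ n, ∀ᵐ y ∂(μ n), 0 ≤ y := by
    intro n; rw [ae_iff]; simpa [Iio] using hμ0 n
  have hν0 : (ν : Measure ℝ) (Iio 0) = 0 := by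
    have := ProbabilityMeasure.le_liminf_measure_open_of_tendsto hν (isOpen_Iio (a := (0:ℝ)))
    refine le_antisymm (this.trans ?_) zero_le
    have h0 : ∀ n, ((μ' ∘ ψ) n : Measure ℝ) (Iio 0) = 0 := fun n => hμ0 _
    rw [liminf_congr (Eventually.of_forall h0)]; simp
  have hνae : ∀ᵐ y ∂(ν : Measure ℝ), 0 ≤ y := by
    rw [ae_iff]; simpa [Iio] using hν0
  refine ⟨ν, inferInstance, hν0, fun s hs => ?_⟩
  let f : BoundedContinuousFunction ℝ ℝ :=
    BoundedContinuousFunction.ofNormedAddCommGroup (fun y => Real.exp (-(s * max y 0)))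
      (by fun_prop) 1 (fun y => by
        rw [Real.norm_eq_abs, abs_of_pos (Real.exp_pos _)]
        have := mul_nonneg hs.le (le_max_right y 0)
        exact Real.exp_le_one_iff.2 (by linarith))
  have hf : ∀ ρ : Measure ℝ, (∀ᵐ y ∂ρ, 0 ≤ y) →
      ∫ y, f y ∂ρ = ∫ y, Real.exp (-(s * y)) ∂ρ := by
    intro ρ hρ
    refine integral_congr_ae ?_
    filter_upwards [hρ] with y hy
    simp [f, max_eq_left hy]
  have h1 := (ProbabilityMeasure.tendsto_iff_forall_integral_tendsto.1 hν) f
  rw [hf _ hνae] at h1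
  have h2 : Tendsto (fun n => ∫ y, f y ∂(((μ' ∘ ψ) n : ProbabilityMeasure ℝ) : Measure ℝ)) atTop
      (𝓝 (Real.exp (-(B s)))) := by
    refine ((hlim s hs).comp hψ.tendsto_atTop).congr fun n => ?_
    exact (hf _ (hae (ψ n))).symm
  exact tendsto_nhds_unique h1 h2

lemma mrp_prod {m : ℕ} {Ω : Type} [MeasurableSpace Ω] (η : ℕ → Ω → Fin m) (κ : ℕ → Ω → ℝ)
    (P : Fin m → Measure Ω) (Q : Fin m → Fin m → ℝ → ℝ)
    (hMRP : ∀ n : ℕ, ∀ I : ℕ → Fin m, ∀ T : ℕ → ℝ,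
      P (I 0) {ω | ∀ k ≤ n, (η k ω = I k ∧ (1 ≤ k → κ k ω ≤ T k))}
        = ENNReal.ofReal (∏ k ∈ Finset.Icc 1 n, Q (I (k - 1)) (I k) (T k)))
    (n : ℕ) (I : ℕ → Fin m) (T : ℕ → ℝ) :
    P (I 0) {ω | ∀ k ≤ n, (η k ω = I k ∧ (1 ≤ k → κ k ω ≤ T k))}
      = ∏ k ∈ Finset.range n, ENNReal.ofReal (Q (I k) (I (k + 1)) (T (k + 1))) := by
  induction n with
  | zero => rw [hMRP]; simp
  | succ n ih =>
    rw [Finset.prod_range_succ, ← ih]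
    by_cases h0 : P (I 0) {ω | ∀ k ≤ n, (η k ω = I k ∧ (1 ≤ k → κ k ω ≤ T k))} = 0
    · rw [h0, zero_mul]
      refine measure_mono_null ?_ h0
      intro ω hω k hk
      exact hω k (by omega)
    · rw [hMRP, hMRP, Finset.prod_Icc_succ_top (by omega), ENNReal.ofReal_mul]
      · simp
      · rw [hMRP] at h0
        by_contra hneg
        exact h0 (ENNReal.ofReal_eq_zero.2 (not_le.1 hneg).le)

/-- law of the first sojourn time on the event of a transition `i → j` -/
def qm {m : ℕ} {Ω : Type} [MeasurableSpace Ω] (η : ℕ → Ω → Fin m) (κ : ℕ → Ω → ℝ)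
    (P : Fin m → Measure Ω) (i j : Fin m) : Measure ℝ :=
  ((P i).restrict {ω | η 0 ω = i ∧ η 1 ω = j}).map (κ 1)

def pathI {m n : ℕ} (i : Fin m) (J : Fin n → Fin m) : ℕ → Fin m
  | 0 => i
  | k + 1 => if h : k < n then J ⟨k, h⟩ else i

lemma pathI_succ {m n : ℕ} (i : Fin m) (J : Fin n → Fin m) (k : Fin n) :
    pathI i J (k + 1) = J k := by
  simp [pathI]

lemma sum_paths {m : ℕ} (φ : Fin m → Fin m → ℝ) (n : ℕ) : ∀ i,
    ∑ J : Fin n → Fin m, ∏ k : Fin n, φ (pathI i J k) (J k) = uIter φ n i := by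
  induction n with
  | zero => intro i; simp [uIter]
  | succ n ih =>
    intro i
    rw [← (Fin.consEquiv (fun _ : Fin (n + 1) => Fin m)).sum_comp, Fintype.sum_prod_type]
    simp only [uIter]
    refine Finset.sum_congr rfl fun j _ => ?_
    rw [← ih j, Finset.mul_sum]
    refine Finset.sum_congr rfl fun J _ => ?_
    rw [Fin.prod_univ_succ]
    congr 1
    refine Finset.prod_congr rfl fun k _ => ?_
    congr 1
    rw [Fin.val_succ]
    rcases k with ⟨k, hk⟩
    cases k with
    | zero => simp [pathI, Fin.consEquiv]
    | succ k =>
      have h1 : k + 1 < n + 1 := by omega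
      have h2 : k < n := by omega
      simp only [pathI, h1, h2, dite_true]
      exact Fin.cons_succ (α := fun _ => Fin m) j J ⟨k, h2⟩

lemma mrp_laplace {m : ℕ} {Ω : Type} [MeasurableSpace Ω] (η : ℕ → Ω → Fin m) (κ : ℕ → Ω → ℝ)
    (P : Fin m → Measure Ω) [hP : ∀ i, IsProbabilityMeasure (P i)]
    (hmeas : ∀ n, Measurable (η n) ∧ Measurable (κ n)) (hκ : ∀ n ω, 0 ≤ κ n ω)
    (Q : Fin m → Fin m → ℝ → ℝ)
    (hMRP : ∀ n : ℕ, ∀ I : ℕ → Fin m, ∀ T : ℕ → ℝ,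
      P (I 0) {ω | ∀ k ≤ n, (η k ω = I k ∧ (1 ≤ k → κ k ω ≤ T k))}
        = ENNReal.ofReal (∏ k ∈ Finset.Icc 1 n, Q (I (k - 1)) (I k) (T k)))
    (s : ℝ) (hs : 0 < s) (n : ℕ) (i : Fin m) :
    ∫ ω, Real.exp (-(s * ∑ k ∈ Finset.Icc 1 n, κ k ω)) ∂(P i)
      = uIter (fun i j => ∫ x, Real.exp (-(s * x)) ∂(qm η κ P i j)) n i := by
  have hη1 : ∀ n j, MeasurableSet {ω | η n ω = j} := fun n j =>
    (hmeas n).1 (measurableSet_singleton j)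
  -- q on half-lines
  have hq : ∀ i j t, qm η κ P i j (Iic t) = ENNReal.ofReal (Q i j t) := by
    intro i j t
    rw [qm, Measure.map_apply (hmeas 1).2 measurableSet_Iic,
      Measure.restrict_apply ((hmeas 1).2 measurableSet_Iic)]
    have := mrp_prod η κ P Q hMRP 1 (fun k => if k = 0 then i else j) (fun _ => t)
    simp only [if_true, Finset.prod_range_one, zero_add, one_ne_zero, if_false] at this
    rw [← this]
    congr 1
    ext ω
    simp only [mem_inter_iff, mem_preimage, mem_Iic, mem_ofPred_eq]
    constructor
    · rintro ⟨h1, h2, h3⟩ k hk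
      interval_cases k <;> simp [*]
    · intro h
      have a0 := h 0 (by omega)
      have a1 := h 1 (by omega)
      simp at a0 a1
      exact ⟨a1.2, a0, a1.1⟩
  have hfin : ∀ i j, IsFiniteMeasure (qm η κ P i j) := fun i j => by
    unfold qm; infer_instance
  let S : (Fin n → Fin m) → Set Ω := fun J => {ω | η 0 ω = i ∧ ∀ k : Fin n, η (k + 1) ω = J k}
  have hS : ∀ J, MeasurableSet (S J) := by
    intro J
    have : S J = {ω | η 0 ω = i} ∩ ⋂ k : Fin n, {ω | η (k + 1) ω = J k} := by
      ext ω; simp [S]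
    rw [this]
    exact (hη1 0 i).inter (MeasurableSet.iInter fun k => hη1 _ _)
  let V : Ω → (Fin n → ℝ) := fun ω k => κ (k + 1) ω
  have hV : Measurable V := measurable_pi_lambda _ fun k => (hmeas _).2
  have hpi : ∀ J, Measure.pi (fun k : Fin n => qm η κ P (pathI i J k) (J k))
      = ((P i).restrict (S J)).map V := by
    intro J
    refine Measure.pi_eq_generateFrom (C := fun _ => range Iic)
      (fun _ => (borel_eq_generateFrom_Iic ℝ).symm.trans (BorelSpace.measurable_eq.symm))
      (fun _ => isPiSystem_Iic)
      (fun k => ⟨fun N => Iic (N : ℝ), fun N => mem_range_self _, fun N => measure_lt_top _ _, ?_⟩) ?_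
    · refine eq_univ_of_forall fun x => ?_
      obtain ⟨N, hN⟩ := exists_nat_ge x
      exact mem_iUnion.2 ⟨N, hN⟩
    · intro s hs
      choose T hT using hs
      obtain rfl : (fun k => Iic (T k)) = s := funext hT
      rw [Measure.map_apply hV (MeasurableSet.univ_pi fun _ => measurableSet_Iic),
        Measure.restrict_apply (hV (MeasurableSet.univ_pi fun _ => measurableSet_Iic))]
      simp only [hq]
      have := mrp_prod η κ P Q hMRP n (pathI i J)
        (fun k => if h : k - 1 < n then T ⟨k - 1, h⟩ else 0)
      rw [Finset.prod_range] at this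
      simp only [pathI_succ, Nat.add_sub_cancel, Fin.is_lt, dite_true, Fin.eta] at this
      rw [← this]
      change _ = P i _
      congr 1
      ext ω
      simp only [S, V, mem_inter_iff, mem_preimage, mem_univ_pi, mem_Iic, mem_ofPred_eq]
      constructor
      · rintro ⟨h1, h2, h3⟩ k hk
        cases k with
        | zero => exact ⟨h2, by simp⟩
        | succ k =>
          have hk' : k < n := by omega
          refine ⟨?_, fun _ => ?_⟩
          · simpa [pathI, hk'] using h3 ⟨k, hk'⟩
          · simpa [hk'] using h1 ⟨k, hk'⟩
      · intro h
        refine ⟨fun k => ?_, (h 0 (by omega)).1, fun k => ?_⟩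
        · have := (h (k + 1) (by omega)).2 (by omega)
          simpa using this
        · have := (h (k + 1) (by omega)).1
          rwa [pathI_succ] at this
  have hae : ∀ᵐ ω ∂(P i), η 0 ω = i := by
    have := mrp_prod η κ P Q hMRP 0 (fun _ => i) (fun _ => 0)
    simp only [Finset.range_zero, Finset.prod_empty] at this
    rw [← prob_compl_eq_zero_iff] at this
    · rw [ae_iff]
      refine measure_mono_null ?_ this
      intro ω hω h
      exact hω (h 0 le_rfl).1
    · have e : {ω | ∀ k ≤ 0, (η k ω = i ∧ (1 ≤ k → κ k ω ≤ 0))} = {ω | η 0 ω = i} := by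
        ext ω; simp
      rw [e]; exact hη1 0 i
  have hsum : ∀ ω, ∑ k ∈ Finset.Icc 1 n, κ k ω = ∑ k : Fin n, κ (k + 1) ω := by
    intro ω
    rw [← Finset.sum_range (fun k => κ (k + 1) ω), Finset.range_eq_Ico,
      Finset.sum_Ico_add' (fun k => κ k ω) 0 n 1]
    rfl
  have hInt : Integrable (fun ω => Real.exp (-(s * ∑ k ∈ Finset.Icc 1 n, κ k ω))) (P i) :=
    integrable_exp_neg (P i) _ (Finset.measurable_sum _ fun k _ => (hmeas k).2) s hs
      (Eventually.of_forall fun ω => Finset.sum_nonneg fun k _ => hκ k ω)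
  have hU : ∀ᵐ ω ∂(P i), ω ∈ ⋃ J, S J := by
    filter_upwards [hae] with ω hω
    exact mem_iUnion.2 ⟨fun k => η (k + 1) ω, hω, fun k => rfl⟩
  rw [← sum_paths, ← Measure.restrict_eq_self_of_ae_mem hU,
    integral_iUnion_fintype hS ?_ (fun J => hInt.integrableOn)]
  · refine Finset.sum_congr rfl fun J _ => ?_
    rw [← integral_fintype_prod_eq_prod (fun k x => Real.exp (-(s * x))), hpi J,
      integral_map hV.aemeasurable
        (Finset.measurable_prod _ fun k _ => by fun_prop).aestronglyMeasurable]
    refine integral_congr_ae (Eventually.of_forall fun ω => ?_)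
    simp only [V]
    rw [hsum, ← Real.exp_sum, Finset.mul_sum, Finset.sum_neg_distrib]
  · intro J J' hJ
    rw [Function.onFun, Set.disjoint_left]
    intro ω h1 h2
    exact hJ (funext fun k => (h1.2 k).symm.trans (h2.2 k))

lemma condB_graph {m : ℕ} (p : ℝ → Fin m → Fin m → ℝ) (hB : CondB p)
    (hp0 : ∀ᶠ ε in 𝓝[>] (0 : ℝ), ∀ i j, 0 ≤ p ε i j) :
    ∃ (E : Fin m → Fin m → Prop) (δ : ℝ), 0 < δ ∧ (∀ i j, Relation.ReflTransGen E i j) ∧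
      ∀ᶠ ε in 𝓝[>] (0 : ℝ), ∀ a b, E a b → δ ≤ p ε a b := by
  obtain ⟨N, hN, c, hcN, hall, hlim⟩ := hB
  have hfwd : ∀ k ≤ N, Relation.ReflTransGen (fun a b => ∃ k < N, c k = a ∧ c (k + 1) = b)
      (c 0) (c k) := by
    intro k
    induction k with
    | zero => intro _; exact Relation.ReflTransGen.refl
    | succ k ih => intro hk; exact (ih (by omega)).tail ⟨k, by omega, rfl, rfl⟩
  have hbwd : ∀ t ≤ N, Relation.ReflTransGen (fun a b => ∃ k < N, c k = a ∧ c (k + 1) = b)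
      (c (N - t)) (c N) := by
    intro t
    induction t with
    | zero => intro _; exact Relation.ReflTransGen.refl
    | succ t ih =>
      intro ht
      refine Relation.ReflTransGen.head ⟨N - (t + 1), by omega, rfl, rfl⟩ ?_
      rw [show N - (t + 1) + 1 = N - t by omega]
      exact ih (by omega)
  obtain ⟨k₀, hk₀, hmin⟩ := (Finset.range N).exists_min_image
    (fun k => Filter.liminf (fun ε => p ε (c k) (c (k + 1))) (𝓝[>] (0 : ℝ)))
    ⟨0, Finset.mem_range.2 hN⟩
  have hL := hlim k₀ (Finset.mem_range.1 hk₀)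
  set L := Filter.liminf (fun ε => p ε (c k₀) (c (k₀ + 1))) (𝓝[>] (0 : ℝ)) with hLdef
  refine ⟨fun a b => ∃ k < N, c k = a ∧ c (k + 1) = b, L / 2, by positivity, ?_, ?_⟩
  · intro i j
    obtain ⟨k, hk, rfl⟩ := hall i
    obtain ⟨l, hl, rfl⟩ := hall j
    have h1 := hbwd (N - k) (by omega)
    rw [show N - (N - k) = k by omega, hcN] at h1
    exact h1.trans (hfwd l hl)
  · have hev : ∀ᶠ ε in 𝓝[>] (0 : ℝ), ∀ k ∈ Finset.range N, L / 2 < p ε (c k) (c (k + 1)) := by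
      rw [Filter.eventually_all_finset]
      intro k hk
      refine Filter.eventually_lt_of_lt_liminf ?_ ?_
      · exact lt_of_lt_of_le (by linarith) (hmin k hk)
      · exact isBoundedUnder_of_eventually_ge (a := 0) (hp0.mono fun ε h => h _ _)
    filter_upwards [hev] with ε hε a b hab
    obtain ⟨k, hk, rfl, rfl⟩ := hab
    exact (hε k (Finset.mem_range.2 hk)).le



/-- Theorem 2, sufficiency part: under conditions B and D₁, the step-sum
reward variables `κ_ε(1) = Σ_{n=1}^{[v_ε]} κ_{ε,n}` converge in distribution (equivalently,
their Laplace transforms converge) to an infinitely divisible nonnegative random variable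
`θ₀` with Laplace transform `e^{−A(s)}`, whose distribution is not concentrated at zero. -/
theorem stmt3 {m : ℕ} (hm : 0 < m) (ε₀ : ℝ) (hε₀ : 0 < ε₀)
    {Ω : Type} [MeasurableSpace Ω]
    -- the Markov renewal process (η_{ε,n}, κ_{ε,n}) and the laws P_i given η_{ε,0} = i
    (η : ℝ → ℕ → Ω → Fin m) (κ : ℝ → ℕ → Ω → ℝ)
    (Pstart : ℝ → Fin m → Measure Ω)
    (hprob : ∀ ε i, IsProbabilityMeasure (Pstart ε i))
    (hmeas : ∀ ε n, Measurable (η ε n) ∧ Measurable (κ ε n))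
    (hκnn : ∀ ε n ω, 0 ≤ κ ε n ω)
    -- Markov renewal structure: semi-Markov transition kernel Q_{ε,ij}(t)
    (Q : ℝ → Fin m → Fin m → ℝ → ℝ)
    (hMRP : ∀ ε ∈ Ioc (0:ℝ) ε₀, ∀ n : ℕ, ∀ I : ℕ → Fin m, ∀ T : ℕ → ℝ,
      Pstart ε (I 0) {ω | ∀ k ≤ n, (η ε k ω = I k ∧ (1 ≤ k → κ ε k ω ≤ T k))}
        = ENNReal.ofReal (∏ k ∈ Finset.Icc 1 n, Q ε (I (k - 1)) (I k) (T k)))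
    -- transition probabilities of the embedded Markov chain
    (p : ℝ → Fin m → Fin m → ℝ)
    (hp : ∀ ε ∈ Ioc (0:ℝ) ε₀, ∀ i j, p ε i j = (Pstart ε i {ω | η ε 1 ω = j}).toReal)
    (hB : CondB p)
    -- stationary distributions of the embedded Markov chains
    (π : ℝ → Fin m → ℝ)
    (hπ : ∀ᶠ ε in 𝓝[>] (0:ℝ), IsStationaryDist (fun i j => p ε i j) (π ε))
    -- arbitrary family of initial distributions q̄_ε and corresponding laws P_ε
    (q : ℝ → Fin m → ℝ) (Pq : ℝ → Measure Ω)
    (hq : ∀ ε ∈ Ioc (0:ℝ) ε₀, (∀ i, 0 ≤ q ε i) ∧ ∑ i, q ε i = 1)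
    (hmix : ∀ ε ∈ Ioc (0:ℝ) ε₀, Pq ε = ∑ i, ENNReal.ofReal (q ε i) • Pstart ε i)
    -- normalizing function v_ε → ∞
    (v : ℝ → ℝ) (hvpos : ∀ ε ∈ Ioc (0:ℝ) ε₀, 0 < v ε)
    (hvinf : Tendsto v (𝓝[>] (0:ℝ)) atTop)
    -- condition D₁
    (A : ℝ → ℝ)
    (hD : ∀ s > 0, Tendsto
      (fun ε => v ε * (1 - ∑ i, π ε i * ∫ ω, Real.exp (-(s * κ ε 1 ω)) ∂(Pstart ε i)))
      (𝓝[>] (0:ℝ)) (𝓝 (A s)))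
    (hApos : ∀ s > 0, 0 < A s)
    (hA0 : Tendsto A (𝓝[>] (0:ℝ)) (𝓝 0)) :
    ∃ μ : Measure ℝ, IsProbabilityMeasure μ ∧ μ (Iio 0) = 0 ∧ μ {0} < 1 ∧
      -- the limit law has Laplace transform e^{−A(s)}
      (∀ s > 0, ∫ x, Real.exp (-(s * x)) ∂μ = Real.exp (-(A s))) ∧
      -- the limit law is infinitely divisible
      (∀ n : ℕ, 0 < n → ∃ ν : Measure ℝ, IsProbabilityMeasure ν ∧ ν (Iio 0) = 0 ∧
        ∀ s > 0, ∫ x, Real.exp (-(s * x)) ∂ν = Real.exp (-(A s / n))) ∧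
      -- κ_ε(1) converges in distribution to the limit law
      ∀ s > 0, Tendsto
        (fun ε => ∫ ω, Real.exp (-(s * ∑ n ∈ Finset.Icc 1 (Nat.floor (v ε)), κ ε n ω)) ∂(Pq ε))
        (𝓝[>] (0:ℝ)) (𝓝 (Real.exp (-(A s)))) := by
  have hp0 : ∀ᶠ ε in 𝓝[>] (0 : ℝ), ∀ i j, 0 ≤ p ε i j := by
    filter_upwards [Ioc_mem_nhdsGT hε₀] with ε hε i j
    rw [hp ε hε]; exact ENNReal.toReal_nonneg
  obtain ⟨E, δ, hδ, hconn, hedge⟩ := condB_graph p hB hp0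
  obtain ⟨C, hC, hgraph⟩ := graph_const hm E δ hδ hconn
  -- the key convergence
  have key : ∀ r > 0, ∀ s > 0, ∀ i, Tendsto
      (fun ε => ∫ ω, Real.exp (-(s * ∑ n ∈ Finset.Icc 1 ⌊r * v ε⌋₊, κ ε n ω)) ∂(Pstart ε i))
      (𝓝[>] (0:ℝ)) (𝓝 (Real.exp (-(r * A s)))) := by
    intro r hr s hs i
    refine tendsto_u _ v
      (fun ε => 1 - ∑ i, π ε i * ∫ ω, Real.exp (-(s * κ ε 1 ω)) ∂(Pstart ε i)) _ (A s) r
      (4 * C ^ 3) hr hvinf (hD s hs) ?_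
    filter_upwards [Ioc_mem_nhdsGT hε₀, hπ, hedge, hp0] with ε hε hπε hedgeε hp0ε
    have hsum : ∀ i, ∑ j, p ε i j = 1 := by
      intro i
      have h := sum_measureReal_preimage_singleton (μ := Pstart ε i) (f := η ε 1)
        Finset.univ (fun y _ => (hmeas ε 1).1 (measurableSet_singleton y))
      simp only [Finset.coe_univ, preimage_univ, probReal_univ] at h
      rw [← h]
      refine Finset.sum_congr rfl fun j _ => ?_
      rw [hp ε hε]; rfl
    obtain ⟨g1, g2⟩ := hgraph (p ε) hp0ε hsum hedgeε
    have hlap := fun n i => mrp_laplace (η ε) (κ ε) (Pstart ε) (hmeas ε) (hκnn ε) (Q ε)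
      (hMRP ε hε) s hs n i
    rw [hlap]
    refine main_bound C hC (p ε) _ (fun i j => integral_nonneg fun x => (Real.exp_pos _).le) ?_
      hsum (π ε) hπε (g1 _ hπε) g2 _ ?_ _ i
    · intro i j
      have hfin : IsFiniteMeasure (qm (η ε) (κ ε) (Pstart ε) i j) := by
        unfold qm; infer_instance
      have hae : ∀ᵐ x ∂(qm (η ε) (κ ε) (Pstart ε) i j), 0 ≤ x := by
        unfold qm
        rw [ae_map_iff (hmeas ε 1).2.aemeasurable measurableSet_Ici]
        exact Eventually.of_forall fun ω => hκnn ε 1 ω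
      calc ∫ x, Real.exp (-(s * x)) ∂(qm (η ε) (κ ε) (Pstart ε) i j)
          ≤ ∫ _, (1:ℝ) ∂(qm (η ε) (κ ε) (Pstart ε) i j) := by
            refine integral_mono_ae
              (integrable_exp_neg _ (fun x => x) measurable_id s hs hae) (integrable_const _) ?_
            filter_upwards [hae] with x hx
            have := mul_nonneg hs.le hx
            exact Real.exp_le_one_iff.2 (by linarith)
        _ = (qm (η ε) (κ ε) (Pstart ε) i j).real univ := by simp
        _ ≤ p ε i j := by
            rw [hp ε hε, Measure.real]
            refine ENNReal.toReal_mono (measure_ne_top _ _) ?_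
            rw [qm, Measure.map_apply (hmeas ε 1).2 MeasurableSet.univ, preimage_univ,
              Measure.restrict_apply_univ]
            exact measure_mono fun ω hω => hω.2
    · congr 1
      refine Finset.sum_congr rfl fun i _ => ?_
      congr 1
      have := hlap 1 i
      simpa [uIter] using this
  -- existence of limit laws
  have hex : ∀ r > 0, ∃ ν : Measure ℝ, IsProbabilityMeasure ν ∧ ν (Iio 0) = 0 ∧
      ∀ s > 0, ∫ x, Real.exp (-(s * x)) ∂ν = Real.exp (-(r * A s)) := by
    intro r hr
    let e : ℕ → ℝ := fun n => 1 / ((n : ℝ) + 1)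
    have he : Tendsto e atTop (𝓝[>] (0:ℝ)) :=
      tendsto_nhdsWithin_iff.2 ⟨tendsto_one_div_add_atTop_nhds_zero_nat,
        Eventually.of_forall fun n => by
          have : (0:ℝ) < 1 / ((n : ℝ) + 1) := by positivity
          exact this⟩
    let X : ℕ → Ω → ℝ := fun n ω => ∑ k ∈ Finset.Icc 1 ⌊r * v (e n)⌋₊, κ (e n) k ω
    have hX : ∀ n, Measurable (X n) := fun n =>
      Finset.measurable_sum _ fun k _ => (hmeas _ k).2
    have hX0 : ∀ n ω, 0 ≤ X n ω := fun n ω => Finset.sum_nonneg fun k _ => hκnn _ k ω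
    have hpr : ∀ n, IsProbabilityMeasure ((Pstart (e n) ⟨0, hm⟩).map (X n)) := fun n =>
      Measure.isProbabilityMeasure_map (hX n).aemeasurable
    refine laplace_limit (fun n => (Pstart (e n) ⟨0, hm⟩).map (X n)) ?_ (fun s => r * A s) ?_ ?_
    · intro n
      rw [Measure.map_apply (hX n) measurableSet_Iio]
      convert measure_empty (μ := Pstart (e n) ⟨0, hm⟩) using 2
      ext ω; simpa using hX0 n ω
    · intro s hs
      refine ((key r hr s hs ⟨0, hm⟩).comp he).congr fun n => ?_
      rw [integral_map (hX n).aemeasurable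
        (Measurable.aestronglyMeasurable (by fun_prop))]
      rfl
    · simpa using hA0.const_mul r
  obtain ⟨μ, hμ, hμ0, hμL⟩ := hex 1 one_pos
  refine ⟨μ, hμ, hμ0, ?_, fun s hs => by rw [hμL s hs, one_mul], ?_, ?_⟩
  · refine lt_of_le_of_ne prob_le_one fun h1 => ?_
    have hae : ∀ᵐ y ∂μ, y = 0 := by
      have := (prob_compl_eq_zero_iff (measurableSet_singleton (0:ℝ))).2 h1
      exact this
    have h2 := hμL 1 one_pos
    have h3 : ∫ x, Real.exp (-(1 * x)) ∂μ = 1 := by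
      rw [integral_congr_ae (g := fun _ => (1:ℝ))]
      · simp
      · filter_upwards [hae] with y hy
        simp [hy]
    rw [h3] at h2
    have := hApos 1 one_pos
    have h4 : Real.exp (-(1 * A 1)) < 1 := Real.exp_lt_one_iff.2 (by linarith)
    linarith
  · intro n hn
    have hn' : (0:ℝ) < n := by exact_mod_cast hn
    obtain ⟨ν, h1, h2, h3⟩ := hex (n : ℝ)⁻¹ (inv_pos.2 hn')
    refine ⟨ν, h1, h2, fun s hs => ?_⟩
    rw [h3 s hs, inv_mul_eq_div]
  · intro s hs
    have hk := fun i => key 1 one_pos s hs i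
    simp only [one_mul] at hk
    rw [tendsto_iff_norm_sub_tendsto_zero]
    have hb : Tendsto (fun ε => ∑ i, ‖(∫ ω, Real.exp (-(s * ∑ n ∈ Finset.Icc 1 ⌊v ε⌋₊, κ ε n ω))
        ∂(Pstart ε i)) - Real.exp (-(A s))‖) (𝓝[>] (0:ℝ)) (𝓝 0) := by
      have := tendsto_finsetSum (Finset.univ : Finset (Fin m))
        (fun i _ => tendsto_iff_norm_sub_tendsto_zero.1 (hk i))
      simpa using this
    refine squeeze_zero' (Eventually.of_forall fun _ => norm_nonneg _) ?_ hb
    filter_upwards [Ioc_mem_nhdsGT hε₀] with ε hε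
    obtain ⟨hq0, hq1⟩ := hq ε hε
    have hInt : ∀ i, Integrable
        (fun ω => Real.exp (-(s * ∑ n ∈ Finset.Icc 1 ⌊v ε⌋₊, κ ε n ω))) (Pstart ε i) := fun i =>
      integrable_exp_neg _ _ (Finset.measurable_sum _ fun k _ => (hmeas ε k).2) s hs
        (Eventually.of_forall fun ω => Finset.sum_nonneg fun k _ => hκnn ε k ω)
    rw [hmix ε hε, integral_finsetSum_measure
      (fun i _ => (hInt i).smul_measure ENNReal.ofReal_ne_top)]
    simp only [integral_smul_measure, ENNReal.toReal_ofReal (hq0 _), smul_eq_mul]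
    have e : Real.exp (-(A s)) = ∑ i, q ε i * Real.exp (-(A s)) := by
      rw [← Finset.sum_mul, hq1, one_mul]
    rw [e, ← Finset.sum_sub_distrib, ← e]
    refine (norm_sum_le _ _).trans (Finset.sum_le_sum fun i _ => ?_)
    rw [← mul_sub, norm_mul, Real.norm_of_nonneg (hq0 i)]
    have : q ε i ≤ 1 := by
      rw [← hq1]
      exact Finset.single_le_sum (f := q ε) (fun i _ => hq0 i) (Finset.mem_univ i)
    exact mul_le_of_le_one_left (norm_nonneg _) this
end
end

section
/- Let condition B hold and let v_ε, ε ∈ (0, ε₀], be positive numbers with v_ε → ∞ as ε → 0. Suppose that for some family of initial distributions q̄_ε the random variables κ_ε(1) = Σ_{n=1}^{[v_ε]} κ_{ε,n} converge in distribution as ε → 0 to a nonnegative random variable θ₀ whose distribution is not concentrated at zero. Then condition D₁ holds: the limit A(s) = lim_{ε→0} v_ε(1 − φ_ε(s)) exists for every s > 0, with A(s) > 0 for s > 0 and A(s) → 0 as s → 0+, and moreover E e^{−sθ₀} = e^{−A(s)} for s ≥ 0. -/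
open MeasureTheory Filter Set
open scoped Topology ENNReal

noncomputable section

/-- Constants in the oscillation bound. -/
noncomputable def oscC (b : ℝ) : ℕ → ℝ
  | 0 => 0
  | k + 1 => (oscC b k + 1) / b

lemma oscC_nonneg {b : ℝ} (hb : 0 < b) (k : ℕ) : 0 ≤ oscC b k := by
  induction k with
  | zero => simp [oscC]
  | succ k ih => simp only [oscC]; positivity

lemma oscC_mono {b : ℝ} (hb : 0 < b) (hb1 : b ≤ 1) : Monotone (oscC b) := by
  refine monotone_nat_of_le_succ fun k => ?_
  simp only [oscC]
  rw [le_div_iff₀ hb]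
  have := oscC_nonneg hb k
  nlinarith

/-- Uniform irreducibility: any two states joined by a short path with edges at least `b`. -/
def UIrr {m : ℕ} (P : Fin m → Fin m → ℝ) (b : ℝ) (L : ℕ) : Prop :=
  ∀ i j, ∃ f : ℕ → Fin m, f 0 = i ∧ (∃ l ≤ L, f l = j) ∧ ∀ k, b ≤ P (f k) (f (k + 1))

lemma osc_bound {m : ℕ} {P : Fin m → Fin m → ℝ} {b : ℝ} {L : ℕ} (hb : 0 < b) (hb1 : b ≤ 1)
    (hU : UIrr P b L) (hP0 : ∀ i j, 0 ≤ P i j) (hP1 : ∀ i, ∑ j, P i j = 1)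
    (u : Fin m → ℝ) (t : ℝ) (ht : 0 ≤ t) (hu : ∀ i, u i ≤ ∑ j, P i j * u j + t) (i j : Fin m) :
    u i - u j ≤ oscC b L * t := by
  obtain ⟨i0, -, hi0⟩ := Finset.exists_max_image Finset.univ u ⟨i, Finset.mem_univ i⟩
  obtain ⟨f, hf0, ⟨l, hl, hfl⟩, hf⟩ := hU i0 j
  have key : ∀ k, u i0 - u (f k) ≤ oscC b k * t := by
    intro k
    induction k with
    | zero => simp [hf0, oscC]
    | succ k ih =>
      have h1 : ∑ j, P (f k) j * (u i0 - u j) ≤ u i0 - u (f k) + t := by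
        have := hu (f k)
        simp only [mul_sub, Finset.sum_sub_distrib, ← Finset.sum_mul, hP1]
        linarith
      have h2 : P (f k) (f (k+1)) * (u i0 - u (f (k+1))) ≤ ∑ j, P (f k) j * (u i0 - u j) :=
        Finset.single_le_sum (f := fun j => P (f k) j * (u i0 - u j))
          (fun j _ => mul_nonneg (hP0 _ _) (sub_nonneg.2 (hi0 j (Finset.mem_univ j))))
          (Finset.mem_univ _)
      have h3 : b * (u i0 - u (f (k+1))) ≤ P (f k) (f (k+1)) * (u i0 - u (f (k+1))) :=
        mul_le_mul_of_nonneg_right (hf k) (sub_nonneg.2 (hi0 _ (Finset.mem_univ _)))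
      simp only [oscC]
      rw [div_mul_eq_mul_div, le_div_iff₀ hb]
      nlinarith
  have h := key l
  rw [hfl] at h
  have h4 := mul_le_mul_of_nonneg_right (oscC_mono hb hb1 hl) ht
  have := hi0 i (Finset.mem_univ i)
  linarith

lemma pi_lower {m : ℕ} {P : Fin m → Fin m → ℝ} {b : ℝ} {L : ℕ} (hb : 0 < b) (hb1 : b ≤ 1)
    (hU : UIrr P b L) (hP0 : ∀ i j, 0 ≤ P i j) (π : Fin m → ℝ)
    (h0 : ∀ i, 0 ≤ π i) (h1 : ∑ i, π i = 1) (h2 : ∀ j, π j = ∑ i, π i * P i j) (j : Fin m) :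
    b ^ L / m ≤ π j := by
  have hm : (0:ℝ) < m := by
    have := j.pos
    exact_mod_cast this
  obtain ⟨i, -, hi⟩ : ∃ i ∈ Finset.univ, (1:ℝ) / m ≤ π i := by
    apply Finset.exists_le_of_sum_le ⟨j, Finset.mem_univ j⟩
    simp [h1, hm.ne']
  obtain ⟨f, hf0, ⟨l, hl, hfl⟩, hf⟩ := hU i j
  have key : ∀ k, b ^ k / m ≤ π (f k) := by
    intro k
    induction k with
    | zero => simpa [hf0] using hi
    | succ k ih =>
      rw [h2]
      have h3 : π (f k) * P (f k) (f (k+1)) ≤ ∑ i, π i * P i (f (k+1)) :=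
        Finset.single_le_sum (f := fun i => π i * P i (f (k+1)))
          (fun i _ => mul_nonneg (h0 _) (hP0 _ _)) (Finset.mem_univ _)
      refine le_trans ?_ h3
      calc b ^ (k+1) / m = b ^ k / m * b := by ring
        _ ≤ _ := mul_le_mul ih (hf k) hb.le (h0 _)
  rw [← hfl]
  refine le_trans ?_ (key l)
  gcongr ?_ / _
  exact pow_le_pow_of_le_one hb.le hb1 hl

/-- iterates of a substochastic matrix applied to one -/
noncomputable def uIt {m : ℕ} (Φ : Fin m → Fin m → ℝ) : ℕ → Fin m → ℝ
  | 0 => fun _ => 1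
  | k + 1 => fun i => ∑ j, Φ i j * uIt Φ k j

section mat
variable {m : ℕ} {P Φ : Fin m → Fin m → ℝ}

lemma uIt_nonneg (hΦ0 : ∀ i j, 0 ≤ Φ i j) (k : ℕ) (i : Fin m) : 0 ≤ uIt Φ k i := by
  induction k generalizing i with
  | zero => simp [uIt]
  | succ k ih => exact Finset.sum_nonneg fun j _ => mul_nonneg (hΦ0 _ _) (ih j)

lemma uIt_anti (hΦ0 : ∀ i j, 0 ≤ Φ i j) (hΦP : ∀ i j, Φ i j ≤ P i j)
    (hP1 : ∀ i, ∑ j, P i j = 1) (k : ℕ) (i : Fin m) : uIt Φ (k+1) i ≤ uIt Φ k i := by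
  induction k generalizing i with
  | zero =>
    simp only [uIt, mul_one]
    rw [← hP1 i]
    exact Finset.sum_le_sum fun j _ => hΦP i j
  | succ k ih => exact Finset.sum_le_sum fun j _ => mul_le_mul_of_nonneg_left (ih j) (hΦ0 i j)

lemma uIt_diff (hΦ0 : ∀ i j, 0 ≤ Φ i j) (hΦP : ∀ i j, Φ i j ≤ P i j)
    (hP1 : ∀ i, ∑ j, P i j = 1) (a : ℝ) (ha : 0 ≤ a) (h : ∀ i, 1 - ∑ j, Φ i j ≤ a)
    (k : ℕ) (i : Fin m) : uIt Φ k i - uIt Φ (k+1) i ≤ a := by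
  induction k generalizing i with
  | zero => simpa [uIt] using h i
  | succ k ih =>
    calc uIt Φ (k+1) i - uIt Φ (k+1+1) i = ∑ j, Φ i j * (uIt Φ k j - uIt Φ (k+1) j) := by
          simp only [mul_sub, Finset.sum_sub_distrib]
          rfl
      _ ≤ ∑ j, P i j * a := Finset.sum_le_sum fun j _ =>
          (mul_le_mul_of_nonneg_left (ih j) (hΦ0 i j)).trans
            (mul_le_mul_of_nonneg_right (hΦP i j) ha)
      _ = a := by rw [← Finset.sum_mul, hP1, one_mul]

lemma uIt_P (hΦ0 : ∀ i j, 0 ≤ Φ i j) (hΦP : ∀ i j, Φ i j ≤ P i j) (k : ℕ) (i : Fin m) (t : ℝ)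
    (h : uIt Φ k i - uIt Φ (k+1) i ≤ t) : uIt Φ k i ≤ ∑ j, P i j * uIt Φ k j + t := by
  have : uIt Φ (k+1) i ≤ ∑ j, P i j * uIt Φ k j :=
    Finset.sum_le_sum fun j _ => mul_le_mul_of_nonneg_right (hΦP i j) (uIt_nonneg hΦ0 k j)
  linarith

variable {b : ℝ} {L : ℕ} {π q : Fin m → ℝ}

lemma avg_bd (q : Fin m → ℝ) (hq0 : ∀ i, 0 ≤ q i) (hq1 : ∑ i, q i = 1) (u : Fin m → ℝ) (x t : ℝ)
    (h : ∀ i, |u i - x| ≤ t) : |∑ i, q i * u i - x| ≤ t := by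
  have : ∑ i, q i * u i - x = ∑ i, q i * (u i - x) := by
    simp only [mul_sub, Finset.sum_sub_distrib, ← Finset.sum_mul, hq1, one_mul]
  rw [this]
  calc _ ≤ ∑ i, |q i * (u i - x)| := Finset.abs_sum_le_sum_abs _ _
    _ ≤ ∑ i, q i * t := Finset.sum_le_sum fun i _ => by
        rw [abs_mul, abs_of_nonneg (hq0 i)]; exact mul_le_mul_of_nonneg_left (h i) (hq0 i)
    _ = t := by rw [← Finset.sum_mul, hq1, one_mul]

lemma w_step (h1 : ∑ i, π i = 1) (h2 : ∀ j, π j = ∑ i, π i * P i j)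
    (hP1 : ∀ i, ∑ j, P i j = 1) (δ : ℝ) (hδ : δ = 1 - ∑ i, π i * ∑ j, Φ i j) (u : Fin m → ℝ) :
    δ = ∑ i, π i * ∑ j, (P i j - Φ i j) ∧
    ∑ i, π i * ∑ j, Φ i j * u j =
      ∑ i, π i * u i - ∑ i, π i * ∑ j, (P i j - Φ i j) * u j := by
  constructor
  · simp only [hδ, Finset.sum_sub_distrib, mul_sub, hP1, mul_one, h1]
  · have : ∑ i, π i * u i = ∑ i, π i * ∑ j, P i j * u j := by
      simp only [Finset.mul_sum]
      rw [Finset.sum_comm]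
      refine Finset.sum_congr rfl fun j _ => ?_
      rw [h2 j, Finset.sum_mul]
      exact Finset.sum_congr rfl fun i _ => by ring
    rw [this]
    simp only [sub_mul, Finset.sum_sub_distrib, mul_sub]
    ring

lemma delta_range (hΦ0 : ∀ i j, 0 ≤ Φ i j) (hΦP : ∀ i j, Φ i j ≤ P i j)
    (hP1 : ∀ i, ∑ j, P i j = 1) (h0 : ∀ i, 0 ≤ π i) (h1 : ∑ i, π i = 1)
    (δ : ℝ) (hδ : δ = 1 - ∑ i, π i * ∑ j, Φ i j) : 0 ≤ δ ∧ δ ≤ 1 := by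
  constructor
  · have : ∑ i, π i * ∑ j, Φ i j ≤ ∑ i, π i * 1 := Finset.sum_le_sum fun i _ =>
      mul_le_mul_of_nonneg_left (by rw [← hP1 i]; exact Finset.sum_le_sum fun j _ => hΦP i j) (h0 i)
    simp only [mul_one, h1] at this
    linarith
  · have : 0 ≤ ∑ i, π i * ∑ j, Φ i j := Finset.sum_nonneg fun i _ =>
      mul_nonneg (h0 i) (Finset.sum_nonneg fun j _ => hΦ0 i j)
    linarith

lemma main_A (hb : 0 < b) (hb1 : b ≤ 1) (hm : 0 < m)
    (hU : UIrr P b L) (hP0 : ∀ i j, 0 ≤ P i j) (hP1 : ∀ i, ∑ j, P i j = 1)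
    (hΦ0 : ∀ i j, 0 ≤ Φ i j) (hΦP : ∀ i j, Φ i j ≤ P i j)
    (h0 : ∀ i, 0 ≤ π i) (h1 : ∑ i, π i = 1) (h2 : ∀ j, π j = ∑ i, π i * P i j)
    (hq0 : ∀ i, 0 ≤ q i) (hq1 : ∑ i, q i = 1)
    (δ : ℝ) (hδ : δ = 1 - ∑ i, π i * ∑ j, Φ i j) (n : ℕ) :
    |∑ i, q i * uIt Φ n i - (1 - δ) ^ n| ≤ 2 * (oscC b L / (b ^ L / m)) * δ := by
  obtain ⟨hδ0, hδ1⟩ := delta_range hΦ0 hΦP hP1 h0 h1 δ hδ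
  have hm' : (0:ℝ) < m := by exact_mod_cast hm
  set c : ℝ := b ^ L / m with hc
  have hcpos : 0 < c := by positivity
  set K := oscC b L with hK
  have hK0 : 0 ≤ K := oscC_nonneg hb L
  have hδ' := (w_step (Φ := Φ) h1 h2 hP1 δ hδ (fun _ => 1)).1
  have ha : ∀ i, 1 - ∑ j, Φ i j ≤ δ / c := by
    intro i
    rw [le_div_iff₀ hcpos]
    have e : 1 - ∑ j, Φ i j = ∑ j, (P i j - Φ i j) := by rw [Finset.sum_sub_distrib, hP1]
    have hnn : ∀ i, 0 ≤ ∑ j, (P i j - Φ i j) := fun i =>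
      Finset.sum_nonneg fun j _ => sub_nonneg.2 (hΦP i j)
    rw [e]
    have s1 : π i * ∑ j, (P i j - Φ i j) ≤ δ := by
      rw [hδ']
      exact Finset.single_le_sum (f := fun i => π i * ∑ j, (P i j - Φ i j))
        (fun i _ => mul_nonneg (h0 i) (hnn i)) (Finset.mem_univ i)
    have := mul_le_mul_of_nonneg_right (pi_lower hb hb1 hU hP0 π h0 h1 h2 i) (hnn i)
    rw [← hc] at this
    linarith
  have hosc : ∀ k i j, |uIt Φ k i - uIt Φ k j| ≤ K / c * δ := by
    have aux : ∀ k i j, uIt Φ k i - uIt Φ k j ≤ K / c * δ := by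
      intro k i j
      have := osc_bound hb hb1 hU hP0 hP1 (uIt Φ k) (δ / c) (by positivity)
        (fun i => uIt_P hΦ0 hΦP k i _ (uIt_diff hΦ0 hΦP hP1 _ (by positivity) ha k i)) i j
      calc _ ≤ _ := this
        _ = _ := by ring
    intro k i j
    rw [abs_le]
    constructor
    · linarith [aux k j i]
    · exact aux k i j
  have hw : ∀ k j, |∑ i, π i * uIt Φ k i - uIt Φ k j| ≤ K / c * δ := fun k j =>
    avg_bd π h0 h1 _ _ _ fun i => hosc k i j
  have hE : ∀ k, |∑ i, π i * uIt Φ k i - (1 - δ) ^ k| ≤ K / c * δ := by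
    intro k
    induction k with
    | zero => simp only [uIt, mul_one, h1, pow_zero, sub_self, abs_zero]; positivity
    | succ k ih =>
      set w := ∑ i, π i * uIt Φ k i with hwdef
      have st := (w_step (Φ := Φ) h1 h2 hP1 δ hδ (uIt Φ k)).2
      have e1 : ∑ i, π i * uIt Φ (k+1) i - (1 - δ) ^ (k+1)
          = (1 - δ) * (w - (1-δ)^k) + ∑ i, π i * ∑ j, (P i j - Φ i j) * (w - uIt Φ k j) := by
        have : ∑ i, π i * ∑ j, (P i j - Φ i j) * (w - uIt Φ k j)
            = δ * w - ∑ i, π i * ∑ j, (P i j - Φ i j) * uIt Φ k j := by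
          rw [hδ', Finset.sum_mul, ← Finset.sum_sub_distrib]
          refine Finset.sum_congr rfl fun i _ => ?_
          rw [mul_assoc, Finset.sum_mul, ← mul_sub, ← Finset.sum_sub_distrib]
          simp only [mul_sub]
        rw [this]
        simp only [uIt]
        rw [st]
        ring
      have e2 : |∑ i, π i * ∑ j, (P i j - Φ i j) * (w - uIt Φ k j)| ≤ δ * (K / c * δ) := by
        calc _ ≤ ∑ i, |π i * ∑ j, (P i j - Φ i j) * (w - uIt Φ k j)| :=
              Finset.abs_sum_le_sum_abs _ _
          _ ≤ ∑ i, π i * ((∑ j, (P i j - Φ i j)) * (K / c * δ)) := by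
              refine Finset.sum_le_sum fun i _ => ?_
              rw [abs_mul, abs_of_nonneg (h0 i)]
              refine mul_le_mul_of_nonneg_left ?_ (h0 i)
              refine (Finset.abs_sum_le_sum_abs _ _).trans ?_
              rw [Finset.sum_mul]
              refine Finset.sum_le_sum fun j _ => ?_
              rw [abs_mul, abs_of_nonneg (sub_nonneg.2 (hΦP i j))]
              exact mul_le_mul_of_nonneg_left (hw k j) (sub_nonneg.2 (hΦP i j))
          _ = _ := by
              simp only [← mul_assoc, ← Finset.sum_mul]
              rw [← hδ']
      rw [e1]
      refine (abs_add_le _ _).trans ?_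
      rw [abs_mul, abs_of_nonneg (sub_nonneg.2 hδ1)]
      have := mul_le_mul_of_nonneg_left ih (sub_nonneg.2 hδ1)
      linarith
  have hqw : |∑ i, q i * uIt Φ n i - ∑ i, π i * uIt Φ n i| ≤ K / c * δ :=
    avg_bd q hq0 hq1 _ _ _ fun i => by rw [abs_sub_comm]; exact hw n i
  have := abs_sub_le (∑ i, q i * uIt Φ n i) (∑ i, π i * uIt Φ n i) ((1 - δ)^n)
  linarith [hE n]

lemma main_B (hb : 0 < b) (hb1 : b ≤ 1) (hm : 0 < m)
    (hU : UIrr P b L) (hP0 : ∀ i j, 0 ≤ P i j) (hP1 : ∀ i, ∑ j, P i j = 1)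
    (hΦ0 : ∀ i j, 0 ≤ Φ i j) (hΦP : ∀ i j, Φ i j ≤ P i j)
    (h0 : ∀ i, 0 ≤ π i) (h1 : ∑ i, π i = 1) (h2 : ∀ j, π j = ∑ i, π i * P i j)
    (hq0 : ∀ i, 0 ≤ q i) (hq1 : ∑ i, q i = 1)
    (δ : ℝ) (hδ : δ = 1 - ∑ i, π i * ∑ j, Φ i j) (n : ℕ) (hn : 0 < n) :
    δ * (∑ i, q i * uIt Φ n i - (oscC b L / (b ^ L / m)) * (1 / n)) ≤ 1 / n := by
  obtain ⟨hδ0, hδ1⟩ := delta_range hΦ0 hΦP hP1 h0 h1 δ hδ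
  have hm' : (0:ℝ) < m := by exact_mod_cast hm
  have hn' : (0:ℝ) < n := by exact_mod_cast hn
  set c : ℝ := b ^ L / m with hc
  have hcpos : 0 < c := by positivity
  set K := oscC b L with hK
  have hδ' := (w_step (Φ := Φ) h1 h2 hP1 δ hδ (fun _ => 1)).1
  set w : ℕ → ℝ := fun k => ∑ i, π i * uIt Φ k i with hwdef
  obtain ⟨k, hk, hk1⟩ : ∃ k ∈ Finset.range n, w k - w (k+1) ≤ 1 / n := by
    apply Finset.exists_le_of_sum_le ⟨0, by simpa using hn⟩
    rw [Finset.sum_range_sub']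
    have : w 0 = 1 := by simp [hwdef, uIt, h1]
    have h' : 0 ≤ w n := Finset.sum_nonneg fun i _ => mul_nonneg (h0 i) (uIt_nonneg hΦ0 n i)
    simp [hn'.ne']
    linarith
  have hd : ∀ i, uIt Φ k i - uIt Φ (k+1) i ≤ 1 / n / c := by
    intro i
    rw [le_div_iff₀ hcpos]
    have hnn : ∀ i, 0 ≤ uIt Φ k i - uIt Φ (k+1) i := fun i =>
      sub_nonneg.2 (uIt_anti hΦ0 hΦP hP1 k i)
    have s1 : π i * (uIt Φ k i - uIt Φ (k+1) i) ≤ w k - w (k+1) := by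
      rw [hwdef]; simp only
      rw [← Finset.sum_sub_distrib]
      simp only [← mul_sub]
      exact Finset.single_le_sum (f := fun i => π i * (uIt Φ k i - uIt Φ (k+1) i))
        (fun i _ => mul_nonneg (h0 i) (hnn i)) (Finset.mem_univ i)
    have := mul_le_mul_of_nonneg_right (pi_lower hb hb1 hU hP0 π h0 h1 h2 i) (hnn i)
    rw [← hc] at this
    linarith
  have hosc : ∀ i j, uIt Φ k i - uIt Φ k j ≤ K / c * (1 / n) := by
    intro i j
    have := osc_bound hb hb1 hU hP0 hP1 (uIt Φ k) (1 / n / c) (by positivity)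
      (fun i => uIt_P hΦ0 hΦP k i _ (hd i)) i j
    calc _ ≤ _ := this
      _ = _ := by ring
  have hanti : ∀ i, uIt Φ n i ≤ uIt Φ k i := fun i =>
    antitone_nat_of_succ_le (f := fun k => uIt Φ k i) (fun k => uIt_anti hΦ0 hΦP hP1 k i)
      (Finset.mem_range.1 hk).le
  have hmin : ∀ j, ∑ i, q i * uIt Φ n i - K / c * (1 / n) ≤ uIt Φ k j := by
    intro j
    have : ∑ i, q i * uIt Φ n i ≤ ∑ i, q i * (uIt Φ k j + K / c * (1 / n)) :=
      Finset.sum_le_sum fun i _ => mul_le_mul_of_nonneg_left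
        (by linarith [hanti i, hosc i j]) (hq0 i)
    rw [← Finset.sum_mul, hq1, one_mul] at this
    linarith
  have st := (w_step (Φ := Φ) h1 h2 hP1 δ hδ (uIt Φ k)).2
  have e : w k - w (k+1) = ∑ i, π i * ∑ j, (P i j - Φ i j) * uIt Φ k j := by
    simp only [hwdef]
    rw [uIt]
    linarith
  refine le_trans ?_ hk1
  rw [e, hδ', Finset.sum_mul]
  refine Finset.sum_le_sum fun i _ => ?_
  rw [mul_assoc, Finset.sum_mul]
  refine mul_le_mul_of_nonneg_left ?_ (h0 i)
  exact Finset.sum_le_sum fun j _ => mul_le_mul_of_nonneg_left (hmin j) (sub_nonneg.2 (hΦP i j))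
end mat

section prob
variable {m : ℕ} {Ω : Type} [MeasurableSpace Ω] {η : ℕ → Ω → Fin m} {κ : ℕ → Ω → ℝ}
  {Ps : Fin m → Measure Ω} {Q : Fin m → Fin m → ℝ → ℝ}

lemma start_one (hprob : ∀ i, IsProbabilityMeasure (Ps i))
    (hmeas : ∀ n, Measurable (η n) ∧ Measurable (κ n))
    (hM : ∀ n : ℕ, ∀ I : ℕ → Fin m, ∀ T : ℕ → ℝ,
      Ps (I 0) {ω | ∀ k ≤ n, (η k ω = I k ∧ (1 ≤ k → κ k ω ≤ T k))}
        = ENNReal.ofReal (∏ k ∈ Finset.Icc 1 n, Q (I (k - 1)) (I k) (T k)))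
    (i : Fin m) : ∀ᵐ ω ∂(Ps i), η 0 ω = i := by
  have := hM 0 (fun _ => i) (fun _ => 0)
  simp at this
  have hms : MeasurableSet {ω | η 0 ω = i} := (hmeas 0).1 (measurableSet_singleton i)
  exact (prob_compl_eq_zero_iff hms).2 this

lemma one_step (hprob : ∀ i, IsProbabilityMeasure (Ps i))
    (hmeas : ∀ n, Measurable (η n) ∧ Measurable (κ n))
    (hM : ∀ n : ℕ, ∀ I : ℕ → Fin m, ∀ T : ℕ → ℝ,
      Ps (I 0) {ω | ∀ k ≤ n, (η k ω = I k ∧ (1 ≤ k → κ k ω ≤ T k))}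
        = ENNReal.ofReal (∏ k ∈ Finset.Icc 1 n, Q (I (k - 1)) (I k) (T k)))
    (i j : Fin m) (t : ℝ) : Ps i {ω | η 1 ω = j ∧ κ 1 ω ≤ t} = ENNReal.ofReal (Q i j t) := by
  have := hM 1 (fun k => if k = 0 then i else j) (fun _ => t)
  simp only [Finset.Icc_self, Finset.prod_singleton, if_true] at this
  simp only [Nat.sub_self, one_ne_zero, if_false] at this
  rw [← this]
  refine measure_congr ?_
  filter_upwards [start_one hprob hmeas hM i] with ω hω
  apply propext
  change (η 1 ω = j ∧ κ 1 ω ≤ t) ↔ (∀ k ≤ 1, η k ω = (if k = 0 then i else j) ∧ (1 ≤ k → κ k ω ≤ t))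
  constructor
  · intro h k hk
    interval_cases k
    · simp [hω]
    · simpa using h
  · intro h
    simpa using h 1 le_rfl

lemma prod_formula (hprob : ∀ i, IsProbabilityMeasure (Ps i))
    (hmeas : ∀ n, Measurable (η n) ∧ Measurable (κ n))
    (hM : ∀ n : ℕ, ∀ I : ℕ → Fin m, ∀ T : ℕ → ℝ,
      Ps (I 0) {ω | ∀ k ≤ n, (η k ω = I k ∧ (1 ≤ k → κ k ω ≤ T k))}
        = ENNReal.ofReal (∏ k ∈ Finset.Icc 1 n, Q (I (k - 1)) (I k) (T k)))
    (n : ℕ) (I : ℕ → Fin m) (T : ℕ → ℝ) :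
    Ps (I 0) {ω | ∀ k ≤ n, (η k ω = I k ∧ (1 ≤ k → κ k ω ≤ T k))}
      = ∏ k ∈ Finset.range n, Ps (I k) {ω | η 1 ω = I (k+1) ∧ κ 1 ω ≤ T (k+1)} := by
  have hR : ∀ n, ∏ k ∈ Finset.Icc 1 n, Q (I (k - 1)) (I k) (T k)
      = ∏ k ∈ Finset.range n, Q (I k) (I (k+1)) (T (k+1)) := by
    intro n
    rw [← Finset.Ico_add_one_right_eq_Icc, Finset.prod_Ico_eq_prod_range]
    refine Finset.prod_congr (by simp) fun k _ => ?_
    simp [add_comm]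
  simp only [one_step hprob hmeas hM]
  by_cases hpos : ∀ k < n, 0 ≤ Q (I k) (I (k+1)) (T (k+1))
  · rw [hM, hR, ENNReal.ofReal_prod_of_nonneg]
    intro k hk
    exact hpos k (Finset.mem_range.1 hk)
  · push Not at hpos
    have hex := hpos
    let k0 := Nat.find hex
    obtain ⟨hk0, hneg⟩ := Nat.find_spec hex
    have hmin : ∀ k < k0, 0 ≤ Q (I k) (I (k+1)) (T (k+1)) := by
      intro k hk
      have := Nat.find_min hex hk
      push Not at this
      exact this (hk.trans hk0)
    rw [Finset.prod_eq_zero (Finset.mem_range.2 hk0) (ENNReal.ofReal_of_nonpos hneg.le)]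
    refine measure_mono_null (t := {ω | ∀ k ≤ k0+1, (η k ω = I k ∧ (1 ≤ k → κ k ω ≤ T k))}) ?_ ?_
    · intro ω hω k hk
      exact hω k (hk.trans hk0)
    · rw [hM, hR, Finset.prod_range_succ]
      apply ENNReal.ofReal_of_nonpos
      exact mul_nonpos_of_nonneg_of_nonpos
        (Finset.prod_nonneg fun k hk => hmin k (Finset.mem_range.1 hk)) hneg.le

/-- one-step Laplace kernel -/
noncomputable def lapK (η : ℕ → Ω → Fin m) (κ : ℕ → Ω → ℝ) (Ps : Fin m → Measure Ω) (s : ℝ)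
    (i j : Fin m) : ℝ := ∫ ω in {ω | η 1 ω = j}, Real.exp (-(s * κ 1 ω)) ∂(Ps i)

lemma pathSet_meas (hmeas : ∀ n, Measurable (η n) ∧ Measurable (κ n)) (n : ℕ) (I : ℕ → Fin m) :
    MeasurableSet {ω | ∀ k ≤ n, η k ω = I k} := by
  have : {ω | ∀ k ≤ n, η k ω = I k} = ⋂ k, ⋂ (_ : k ≤ n), η k ⁻¹' {I k} := by
    ext ω; simp
  rw [this]
  exact MeasurableSet.iInter fun k => MeasurableSet.iInter fun _ =>
    (hmeas k).1 (measurableSet_singleton _)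

lemma path_int (hprob : ∀ i, IsProbabilityMeasure (Ps i))
    (hmeas : ∀ n, Measurable (η n) ∧ Measurable (κ n))
    (hM : ∀ n : ℕ, ∀ I : ℕ → Fin m, ∀ T : ℕ → ℝ,
      Ps (I 0) {ω | ∀ k ≤ n, (η k ω = I k ∧ (1 ≤ k → κ k ω ≤ T k))}
        = ENNReal.ofReal (∏ k ∈ Finset.Icc 1 n, Q (I (k - 1)) (I k) (T k)))
    (s : ℝ) (n : ℕ) (I : ℕ → Fin m) :
    ∫ ω in {ω | ∀ k ≤ n, η k ω = I k}, Real.exp (-(s * ∑ k ∈ Finset.Icc 1 n, κ k ω)) ∂(Ps (I 0))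
      = ∏ k ∈ Finset.range n, lapK η κ Ps s (I k) (I (k+1)) := by
  let ν : Fin n → Measure ℝ := fun k => ((Ps (I k)).restrict {ω | η 1 ω = I (k+1)}).map (κ 1)
  let X : Ω → Fin n → ℝ := fun ω k => κ (k+1) ω
  have hX : Measurable X := measurable_pi_lambda _ fun k => (hmeas _).2
  have hfin : ∀ k, IsFiniteMeasure (ν k) := fun k => by dsimp only [ν]; infer_instance
  have hpi : Measure.pi ν = ((Ps (I 0)).restrict {ω | ∀ k ≤ n, η k ω = I k}).map X := by
    refine Measure.pi_eq_generateFrom (C := fun _ => range Iic)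
      (fun _ => ?_) (fun _ => isPiSystem_Iic) (fun k => ?_) ?_
    · rw [← borel_eq_generateFrom_Iic]; exact (BorelSpace.measurable_eq).symm
    · refine ⟨fun j => Iic (j:ℝ), fun j => ⟨_, rfl⟩, fun j => measure_lt_top _ _, ?_⟩
      rw [iUnion_eq_univ_iff]
      intro x
      obtain ⟨j, hj⟩ := exists_nat_ge x
      exact ⟨j, hj⟩
    · intro S hS
      choose T hT using hS
      obtain rfl : (fun k => Iic (T k)) = S := funext hT
      let T' : ℕ → ℝ := fun k => if h : k - 1 < n then T ⟨k - 1, h⟩ else 0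
      have hT' : ∀ k : Fin n, T' (k+1) = T k := by intro k; simp [T']
      rw [Measure.map_apply hX (MeasurableSet.univ_pi fun _ => measurableSet_Iic),
        Measure.restrict_apply (hX (MeasurableSet.univ_pi fun _ => measurableSet_Iic))]
      have e : X ⁻¹' (univ.pi fun k => Iic (T k)) ∩ {ω | ∀ k ≤ n, η k ω = I k}
          = {ω | ∀ k ≤ n, (η k ω = I k ∧ (1 ≤ k → κ k ω ≤ T' k))} := by
        ext ω
        simp only [mem_inter_iff, mem_preimage, mem_univ_pi, mem_Iic, mem_ofPred_eq, X]
        constructor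
        · rintro ⟨h1, h2⟩ k hk
          refine ⟨h2 k hk, fun h => ?_⟩
          obtain ⟨l, rfl⟩ : ∃ l, k = l + 1 := ⟨k - 1, by omega⟩
          have := h1 ⟨l, hk⟩
          rwa [← hT' ⟨l, hk⟩] at this
        · intro h
          refine ⟨fun k => ?_, fun k hk => (h k hk).1⟩
          rw [← hT' k]
          exact (h (k+1) k.2).2 (by omega)
      rw [e, prod_formula hprob hmeas hM, Finset.prod_range]
      refine Finset.prod_congr rfl fun k _ => ?_
      simp only [ν]
      rw [Measure.map_apply (hmeas 1).2 measurableSet_Iic,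
        Measure.restrict_apply ((hmeas 1).2 measurableSet_Iic), ← hT' k]
      congr 1
      ext ω
      simp [and_comm]
  have h1 := integral_fintype_prod_eq_prod (𝕜 := ℝ) (μ := ν) (fun _ x => Real.exp (-(s * x)))
  rw [hpi, integral_map hX.aemeasurable (by
    apply Measurable.aestronglyMeasurable; fun_prop)] at h1
  rw [Finset.prod_range]
  convert h1 using 1
  · refine integral_congr_ae (Eventually.of_forall fun ω => ?_)
    simp only [X]
    rw [← Real.exp_sum, Finset.sum_neg_distrib, ← Finset.mul_sum]
    rw [← Finset.Ico_add_one_right_eq_Icc, Finset.sum_Ico_eq_sum_range]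
    rw [← Finset.sum_range (fun k => κ (k+1) ω)]
    simp [add_comm]
  · refine Finset.prod_congr rfl fun k _ => ?_
    simp only [ν, lapK]
    rw [integral_map (hmeas 1).2.aemeasurable (by
      apply Measurable.aestronglyMeasurable; fun_prop)]

lemma exp_integrable (hprob : ∀ i, IsProbabilityMeasure (Ps i)) 
    (hmeas : ∀ n, Measurable (η n) ∧ Measurable (κ n)) (hnn : ∀ n ω, 0 ≤ κ n ω)
    (s : ℝ) (hs : 0 < s) (F : Finset ℕ) (i : Fin m) :
    Integrable (fun ω => Real.exp (-(s * ∑ k ∈ F, κ k ω))) (Ps i) := by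
  have hκ : ∀ n, Measurable (κ n) := fun n => (hmeas n).2
  refine Integrable.of_bound (C := 1) ?_ (Eventually.of_forall fun ω => ?_)
  · apply Measurable.aestronglyMeasurable; fun_prop
  · rw [Real.norm_eq_abs, Real.abs_exp, Real.exp_le_one_iff]
    have := mul_nonneg hs.le (Finset.sum_nonneg fun k (_ : k ∈ F) => hnn k ω)
    linarith

lemma partial_int (hprob : ∀ i, IsProbabilityMeasure (Ps i))
    (hmeas : ∀ n, Measurable (η n) ∧ Measurable (κ n)) (hnn : ∀ n ω, 0 ≤ κ n ω)
    (hM : ∀ n : ℕ, ∀ I : ℕ → Fin m, ∀ T : ℕ → ℝ,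
      Ps (I 0) {ω | ∀ k ≤ n, (η k ω = I k ∧ (1 ≤ k → κ k ω ≤ T k))}
        = ENNReal.ofReal (∏ k ∈ Finset.Icc 1 n, Q (I (k - 1)) (I k) (T k)))
    (s : ℝ) (hs : 0 < s) (d r : ℕ) (I : ℕ → Fin m) :
    ∫ ω in {ω | ∀ k ≤ r, η k ω = I k},
        Real.exp (-(s * ∑ k ∈ Finset.Icc 1 (r + d), κ k ω)) ∂(Ps (I 0))
      = (∏ k ∈ Finset.range r, lapK η κ Ps s (I k) (I (k+1))) * uIt (lapK η κ Ps s) d (I r) := by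
  induction d generalizing r I with
  | zero => simpa [uIt] using path_int hprob hmeas hM s r I
  | succ d ih =>
    let J : Fin m → ℕ → Fin m := fun j => Function.update I (r+1) j
    have hJ : ∀ j k, k ≤ r → J j k = I k := fun j k hk => by
      simp only [J]; rw [Function.update_of_ne (by omega)]
    have hJr : ∀ j, J j (r+1) = j := fun j => by simp [J]
    have e : {ω | ∀ k ≤ r, η k ω = I k} = ⋃ j, {ω | ∀ k ≤ r + 1, η k ω = J j k} := by
      ext ω
      simp only [mem_ofPred_eq, mem_iUnion]
      constructor
      · intro h
        refine ⟨η (r+1) ω, fun k hk => ?_⟩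
        rcases Nat.lt_or_ge k (r+1) with h' | h'
        · rw [hJ _ _ (by omega)]; exact h k (by omega)
        · obtain rfl : k = r + 1 := by omega
          rw [hJr]
      · rintro ⟨j, hj⟩ k hk
        rw [← hJ j k hk]; exact hj k (by omega)
    rw [e, integral_iUnion_fintype (fun j => pathSet_meas hmeas _ _) ?_
      (fun j => (exp_integrable hprob hmeas hnn s hs _ _).integrableOn)]
    · simp only [uIt]
      rw [Finset.mul_sum]
      refine Finset.sum_congr rfl fun j _ => ?_
      have := ih (r+1) (J j)
      rw [hJ j 0 (Nat.zero_le _), hJr] at this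
      rw [show r + (d+1) = r + 1 + d by ring, this, Finset.prod_range_succ, hJr, hJ j r le_rfl,
        mul_assoc]
      congr 1
      refine Finset.prod_congr rfl fun k hk => ?_
      have := Finset.mem_range.1 hk
      rw [hJ j k (by omega), hJ j (k+1) (by omega)]
    · intro j j' hjj
      rw [Function.onFun, Set.disjoint_left]
      intro ω h h'
      apply hjj
      have h1 := h (r+1) le_rfl
      have h2 := h' (r+1) le_rfl
      rw [hJr] at h1 h2
      rw [← h1, ← h2]

lemma full_int (hprob : ∀ i, IsProbabilityMeasure (Ps i))
    (hmeas : ∀ n, Measurable (η n) ∧ Measurable (κ n)) (hnn : ∀ n ω, 0 ≤ κ n ω)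
    (hM : ∀ n : ℕ, ∀ I : ℕ → Fin m, ∀ T : ℕ → ℝ,
      Ps (I 0) {ω | ∀ k ≤ n, (η k ω = I k ∧ (1 ≤ k → κ k ω ≤ T k))}
        = ENNReal.ofReal (∏ k ∈ Finset.Icc 1 n, Q (I (k - 1)) (I k) (T k)))
    (s : ℝ) (hs : 0 < s) (n : ℕ) (i : Fin m) :
    ∫ ω, Real.exp (-(s * ∑ k ∈ Finset.Icc 1 n, κ k ω)) ∂(Ps i) = uIt (lapK η κ Ps s) n i := by
  have := partial_int hprob hmeas hnn hM s hs n 0 (fun _ => i)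
  simp only [Finset.range_zero, Finset.prod_empty, one_mul, zero_add] at this
  rw [← this, setIntegral_eq_integral_of_ae_compl_eq_zero]
  filter_upwards [start_one hprob hmeas hM i] with ω hω h
  exfalso
  apply h
  intro k hk
  obtain rfl : k = 0 := by omega
  exact hω

lemma lapK_nonneg (s : ℝ) (i j : Fin m) : 0 ≤ lapK η κ Ps s i j :=
  integral_nonneg fun _ => (Real.exp_pos _).le

lemma lapK_le (hprob : ∀ i, IsProbabilityMeasure (Ps i))
    (hmeas : ∀ n, Measurable (η n) ∧ Measurable (κ n)) (hnn : ∀ n ω, 0 ≤ κ n ω)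
    (s : ℝ) (hs : 0 < s) (i j : Fin m) : lapK η κ Ps s i j ≤ (Ps i {ω | η 1 ω = j}).toReal := by
  have h1 : Integrable (fun ω => Real.exp (-(s * κ 1 ω))) (Ps i) := by
    simpa using exp_integrable hprob hmeas hnn s hs {1} i
  have : lapK η κ Ps s i j ≤ ∫ ω in {ω | η 1 ω = j}, (1:ℝ) ∂(Ps i) := by
    refine integral_mono h1.integrableOn (integrable_const _) fun ω => ?_
    simp only [Real.exp_le_one_iff]
    have := mul_nonneg hs.le (hnn 1 ω)
    linarith
  simpa [Measure.real] using this

lemma row_one (hprob : ∀ i, IsProbabilityMeasure (Ps i))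
    (hmeas : ∀ n, Measurable (η n) ∧ Measurable (κ n)) (i : Fin m) :
    ∑ j, (Ps i {ω | η 1 ω = j}).toReal = 1 := by
  have h : ∫ ω in (⋃ j, {ω | η 1 ω = j}), (1:ℝ) ∂(Ps i) = _ :=
    integral_iUnion_fintype (fun j => (hmeas 1).1 (measurableSet_singleton j))
      (fun j j' hj => by
        rw [Function.onFun, Set.disjoint_left]
        intro ω h h'
        exact hj (h.symm.trans h')) (fun j => (integrable_const _).integrableOn)
  have e : (⋃ j, {ω | η 1 ω = j}) = univ := by ext; simp
  rw [e] at h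
  simpa [Measure.real] using h.symm

end prob
lemma asym {n : ℝ → ℕ} {δ x v : ℝ → ℝ} {l : Filter ℝ} (C K L : ℝ) (hL : 0 < L)
    (hv : Tendsto v l atTop) (hn : ∀ ε, n ε = Nat.floor (v ε)) (hx : Tendsto x l (𝓝 L))
    (hδ0 : ∀ᶠ ε in l, 0 ≤ δ ε)
    (hA : ∀ᶠ ε in l, |x ε - (1 - δ ε) ^ (n ε)| ≤ C * δ ε)
    (hB : ∀ᶠ ε in l, δ ε * (x ε - K * (1 / n ε)) ≤ 1 / n ε) :
    Tendsto (fun ε => v ε * δ ε) l (𝓝 (-Real.log L)) := by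
  have hnt : Tendsto (fun ε => (n ε : ℝ)) l atTop := by
    simp only [hn]
    exact tendsto_natCast_atTop_atTop.comp (tendsto_nat_floor_atTop.comp hv)
  have hinv : Tendsto (fun ε => 1 / (n ε : ℝ)) l (𝓝 0) := by
    simp only [one_div]
    exact hnt.inv_tendsto_atTop
  have hy : Tendsto (fun ε => x ε - K * (1 / n ε)) l (𝓝 L) := by
    simpa using hx.sub (hinv.const_mul K)
  have hy2 : ∀ᶠ ε in l, L / 2 < x ε - K * (1 / n ε) := hy.eventually_const_lt (by linarith)
  have hδ : Tendsto δ l (𝓝 0) := by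
    have h2 : Tendsto (fun ε => (2 / L) * (1 / (n ε : ℝ))) l (𝓝 0) := by
      simpa using hinv.const_mul (2 / L)
    refine squeeze_zero' hδ0 ?_ h2
    filter_upwards [hδ0, hB, hy2] with ε h0 hb hy
    rw [div_mul_eq_mul_div, le_div_iff₀ hL]
    nlinarith
  have hpow : Tendsto (fun ε => (1 - δ ε) ^ (n ε)) l (𝓝 L) := by
    have h0 : Tendsto (fun ε => x ε - (1 - δ ε) ^ (n ε)) l (𝓝 0) :=
      squeeze_zero_norm' hA (by simpa using hδ.const_mul C)
    simpa using hx.sub h0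
  have hlog : Tendsto (fun ε => -((n ε : ℝ) * Real.log (1 - δ ε))) l (𝓝 (-Real.log L)) := by
    have := (hpow.log hL.ne').neg
    simpa only [Real.log_pow] using this
  have hlow : Tendsto (fun ε => (1 - δ ε) * -((n ε : ℝ) * Real.log (1 - δ ε))) l
      (𝓝 (-Real.log L)) := by
    have h1 : Tendsto (fun ε => 1 - δ ε) l (𝓝 1) := by simpa using hδ.const_sub 1
    simpa using h1.mul hlog
  have hδ1 : ∀ᶠ ε in l, δ ε < 1 := hδ.eventually_lt_const one_pos
  have hnδ : Tendsto (fun ε => (n ε : ℝ) * δ ε) l (𝓝 (-Real.log L)) := by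
    refine tendsto_of_tendsto_of_tendsto_of_le_of_le' hlow hlog ?_ ?_
    · filter_upwards [hδ1] with ε h1
      have hp : 0 < 1 - δ ε := by linarith
      have := Real.one_sub_inv_le_log_of_pos hp
      have h3 : (1 - δ ε) * -Real.log (1 - δ ε) ≤ δ ε := by
        have h4 := mul_le_mul_of_nonneg_left this hp.le
        rw [mul_sub, mul_inv_cancel₀ hp.ne'] at h4
        linarith
      have := mul_le_mul_of_nonneg_left h3 (Nat.cast_nonneg (α := ℝ) (n ε))
      linarith
    · filter_upwards [hδ1] with ε h1
      have hp : 0 < 1 - δ ε := by linarith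
      have h3 := Real.log_le_sub_one_of_pos hp
      have h4 : δ ε ≤ - Real.log (1 - δ ε) := by linarith
      have := mul_le_mul_of_nonneg_left h4 (Nat.cast_nonneg (α := ℝ) (n ε))
      linarith
  have hr : Tendsto (fun ε => v ε / (n ε : ℝ)) l (𝓝 1) := by
    have := ((tendsto_nat_floor_div_atTop (R := ℝ)).comp hv).inv₀ one_ne_zero
    simpa [Function.comp_def, hn] using this
  have := hr.mul hnδ
  rw [one_mul] at this
  refine this.congr' ?_
  filter_upwards [hnt.eventually_gt_atTop 0] with ε h
  field_simp

lemma condB_unif {m : ℕ} {p : ℝ → Fin m → Fin m → ℝ} (hB : CondB p)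
    (h0 : ∀ᶠ ε in 𝓝[>] (0:ℝ), ∀ i j, 0 ≤ p ε i j) :
    ∃ b : ℝ, 0 < b ∧ b ≤ 1 ∧ ∃ L : ℕ, ∀ᶠ ε in 𝓝[>] (0:ℝ), UIrr (p ε) b L := by
  obtain ⟨N, hN, c, hcN, hall, hlim⟩ := hB
  have hk : ∀ k, ∃ b : ℝ, 0 < b ∧ (k < N → ∀ᶠ ε in 𝓝[>] (0:ℝ), b ≤ p ε (c k) (c (k+1))) := by
    intro k
    by_cases h : k < N
    · have hl := hlim k h
      refine ⟨_, half_pos hl, fun _ => ?_⟩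
      have := eventually_lt_of_lt_liminf (half_lt_self hl)
        ⟨0, by simp only [eventually_map]; filter_upwards [h0] with ε h using h _ _⟩
      filter_upwards [this] with ε h using h.le
    · exact ⟨1, one_pos, fun h' => absurd h' h⟩
  choose β hβ0 hβ using hk
  obtain ⟨k0, -, hmin⟩ := Finset.exists_min_image (Finset.range N) β ⟨0, by simpa using hN⟩
  refine ⟨min (β k0) 1, lt_min (hβ0 _) one_pos, min_le_right _ _, 2 * N, ?_⟩
  have hev : ∀ᶠ ε in 𝓝[>] (0:ℝ), ∀ k ∈ Finset.range N, β k ≤ p ε (c k) (c (k+1)) := by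
    rw [Filter.eventually_all_finset]
    intro k hk
    exact hβ k (Finset.mem_range.1 hk)
  filter_upwards [hev] with ε hε
  have hc' : ∀ k, c ((k+1) % N) = c (k % N + 1) := by
    intro k
    have hlt := Nat.mod_lt k hN
    rw [Nat.add_mod]
    rcases Nat.lt_or_ge (k % N + 1) N with h | h
    · have : 1 % N = 1 := Nat.mod_eq_of_lt (by omega)
      rw [this, Nat.mod_eq_of_lt h]
    · have h1 : k % N + 1 = N := by omega
      rw [Nat.add_mod_mod, h1, Nat.mod_self, hcN]
  have hall' : ∀ i, ∃ k < N, c k = i := by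
    intro i
    obtain ⟨k, hk, rfl⟩ := hall i
    rcases hk.lt_or_eq with h | rfl
    · exact ⟨k, h, rfl⟩
    · exact ⟨0, hN, hcN.symm⟩
  intro i j
  obtain ⟨a, ha, rfl⟩ := hall' i
  obtain ⟨d, hd, rfl⟩ := hall' j
  refine ⟨fun k => c ((a + k) % N), by simp [Nat.mod_eq_of_lt ha], ⟨N - a + d, by omega, ?_⟩, ?_⟩
  · have : a + (N - a + d) = d + N := by omega
    simp only [this, Nat.add_mod_right, Nat.mod_eq_of_lt hd]
  · intro k
    have hlt := Nat.mod_lt (a + k) hN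
    simp only [← add_assoc, hc']
    exact (min_le_left _ _).trans ((hmin _ (by simpa using hlt)).trans (hε _ (by simpa using hlt)))

lemma lap_facts (μ : Measure ℝ) (hμprob : IsProbabilityMeasure μ) (hμnn : μ (Iio 0) = 0)
    (hμ0 : μ {0} < 1) :
    (∀ s > 0, 0 < ∫ x, Real.exp (-(s * x)) ∂μ) ∧ (∀ s > 0, ∫ x, Real.exp (-(s * x)) ∂μ < 1) ∧
    Tendsto (fun s => ∫ x, Real.exp (-(s * x)) ∂μ) (𝓝[>] (0:ℝ)) (𝓝 1) := by
  have hae : ∀ᵐ x ∂μ, 0 ≤ x := by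
    rw [ae_iff]; convert hμnn using 2; ext; simp
  have hbd : ∀ s > 0, ∀ᵐ x ∂μ, ‖Real.exp (-(s * x))‖ ≤ 1 := by
    intro s hs
    filter_upwards [hae] with x hx
    rw [Real.norm_eq_abs, Real.abs_exp, Real.exp_le_one_iff]
    have := mul_nonneg (le_of_lt hs) hx
    linarith
  have hIntg : ∀ s > 0, Integrable (fun x => Real.exp (-(s * x))) μ := fun s hs =>
    Integrable.of_bound (C := 1) (by apply Measurable.aestronglyMeasurable; fun_prop) (hbd s hs)
  refine ⟨fun s hs => integral_exp_pos (hIntg s hs), fun s hs => ?_, ?_⟩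
  · by_contra hcon
    push Not at hcon
    have hnn : 0 ≤ᵐ[μ] fun x => 1 - Real.exp (-(s * x)) := by
      filter_upwards [hbd s hs] with x hx
      rw [Real.norm_eq_abs, Real.abs_exp] at hx
      simpa using hx
    have h1 : ∫ x, (1 - Real.exp (-(s * x))) ∂μ = 0 := by
      refine le_antisymm ?_ (integral_nonneg_of_ae hnn)
      rw [integral_sub (integrable_const _) (hIntg s hs)]
      simpa using hcon
    rw [integral_eq_zero_iff_of_nonneg_ae hnn ((integrable_const _).sub (hIntg s hs))] at h1
    have h2 : ∀ᵐ x ∂μ, x ∈ ({0} : Set ℝ) := by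
      filter_upwards [h1] with x hx
      have : Real.exp (-(s * x)) = 1 := by
        simp only [Pi.zero_apply] at hx; linarith
      rw [Real.exp_eq_one_iff] at this
      simpa [hs.ne'] using this
    have h3 : μ {0} = 1 := (prob_compl_eq_zero_iff (measurableSet_singleton 0)).1 h2
    exact hμ0.ne h3
  · have : Tendsto (fun s => ∫ x, Real.exp (-(s * x)) ∂μ) (𝓝[>] (0:ℝ)) (𝓝 (∫ _, (1:ℝ) ∂μ)) := by
      refine tendsto_integral_filter_of_dominated_convergence (fun _ => 1) ?_ ?_
        (integrable_const _) ?_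
      · exact Eventually.of_forall fun s => by apply Measurable.aestronglyMeasurable; fun_prop
      · filter_upwards [self_mem_nhdsWithin] with s hs using hbd s hs
      · refine Eventually.of_forall fun x => ?_
        have : Continuous fun s : ℝ => Real.exp (-(s * x)) := by fun_prop
        have h := (this.tendsto 0).mono_left (nhdsWithin_le_nhds (s := Ioi 0))
        simpa using h
    simpa using this


/-- Theorem 2, necessity part: under condition B, if the step-sum reward
variables `κ_ε(1)` converge in distribution (for some family of initial distributions) to a
nonnegative random variable `θ₀` whose law `μ` is not concentrated at zero, then condition
D₁ holds, and the Laplace transform of `θ₀` is `e^{−A(s)}`. -/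
theorem stmt4 {m : ℕ} (hm : 0 < m) (ε₀ : ℝ) (hε₀ : 0 < ε₀)
    {Ω : Type} [MeasurableSpace Ω]
    (η : ℝ → ℕ → Ω → Fin m) (κ : ℝ → ℕ → Ω → ℝ)
    (Pstart : ℝ → Fin m → Measure Ω)
    (hprob : ∀ ε i, IsProbabilityMeasure (Pstart ε i))
    (hmeas : ∀ ε n, Measurable (η ε n) ∧ Measurable (κ ε n))
    (hκnn : ∀ ε n ω, 0 ≤ κ ε n ω)
    (Q : ℝ → Fin m → Fin m → ℝ → ℝ)
    (hMRP : ∀ ε ∈ Ioc (0:ℝ) ε₀, ∀ n : ℕ, ∀ I : ℕ → Fin m, ∀ T : ℕ → ℝ,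
      Pstart ε (I 0) {ω | ∀ k ≤ n, (η ε k ω = I k ∧ (1 ≤ k → κ ε k ω ≤ T k))}
        = ENNReal.ofReal (∏ k ∈ Finset.Icc 1 n, Q ε (I (k - 1)) (I k) (T k)))
    (p : ℝ → Fin m → Fin m → ℝ)
    (hp : ∀ ε ∈ Ioc (0:ℝ) ε₀, ∀ i j, p ε i j = (Pstart ε i {ω | η ε 1 ω = j}).toReal)
    (hB : CondB p)
    (π : ℝ → Fin m → ℝ)
    (hπ : ∀ᶠ ε in 𝓝[>] (0:ℝ), IsStationaryDist (fun i j => p ε i j) (π ε))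
    -- some family of initial distributions q̄_ε and corresponding laws P_ε
    (q : ℝ → Fin m → ℝ) (Pq : ℝ → Measure Ω)
    (hq : ∀ ε ∈ Ioc (0:ℝ) ε₀, (∀ i, 0 ≤ q ε i) ∧ ∑ i, q ε i = 1)
    (hmix : ∀ ε ∈ Ioc (0:ℝ) ε₀, Pq ε = ∑ i, ENNReal.ofReal (q ε i) • Pstart ε i)
    (v : ℝ → ℝ) (hvpos : ∀ ε ∈ Ioc (0:ℝ) ε₀, 0 < v ε)
    (hvinf : Tendsto v (𝓝[>] (0:ℝ)) atTop)
    -- κ_ε(1) converges in distribution to the law μ of θ₀, nonnegative and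
    -- not concentrated at zero
    (μ : Measure ℝ) (hμprob : IsProbabilityMeasure μ) (hμnn : μ (Iio 0) = 0)
    (hμ0 : μ {0} < 1)
    (hconv : ∀ s > 0, Tendsto
      (fun ε => ∫ ω, Real.exp (-(s * ∑ n ∈ Finset.Icc 1 (Nat.floor (v ε)), κ ε n ω)) ∂(Pq ε))
      (𝓝[>] (0:ℝ)) (𝓝 (∫ x, Real.exp (-(s * x)) ∂μ))) :
    ∃ A : ℝ → ℝ,
      (∀ s > 0, Tendsto
        (fun ε => v ε * (1 - ∑ i, π ε i * ∫ ω, Real.exp (-(s * κ ε 1 ω)) ∂(Pstart ε i)))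
        (𝓝[>] (0:ℝ)) (𝓝 (A s))) ∧
      (∀ s > 0, 0 < A s) ∧
      Tendsto A (𝓝[>] (0:ℝ)) (𝓝 0) ∧
      ∀ s > 0, ∫ x, Real.exp (-(s * x)) ∂μ = Real.exp (-(A s)) := by
  obtain ⟨hL0, hL1, hLt⟩ := lap_facts μ hμprob hμnn hμ0
  have hIoc : ∀ᶠ ε in 𝓝[>] (0:ℝ), ε ∈ Ioc (0:ℝ) ε₀ := Ioc_mem_nhdsGT hε₀
  have hp0 : ∀ᶠ ε in 𝓝[>] (0:ℝ), ∀ i j, 0 ≤ p ε i j := by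
    filter_upwards [hIoc] with ε hε i j
    rw [hp ε hε]; exact ENNReal.toReal_nonneg
  obtain ⟨b, hb, hb1, L, hU⟩ := condB_unif hB hp0
  refine ⟨fun s => -Real.log (∫ x, Real.exp (-(s * x)) ∂μ), fun s hs => ?_, fun s hs => ?_, ?_,
    fun s hs => ?_⟩
  · let Φ : ℝ → Fin m → Fin m → ℝ := fun ε => lapK (η ε) (κ ε) (Pstart ε) s
    have hδeq : ∀ᶠ ε in 𝓝[>] (0:ℝ),
        (1 - ∑ i, π ε i * ∫ ω, Real.exp (-(s * κ ε 1 ω)) ∂(Pstart ε i))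
          = 1 - ∑ i, π ε i * ∑ j, Φ ε i j := by
      filter_upwards [hIoc] with ε hε
      congr 1
      refine Finset.sum_congr rfl fun i _ => ?_
      have := full_int (hprob ε) (hmeas ε) (hκnn ε) (hMRP ε hε) s hs 1 i
      simp only [Finset.Icc_self, Finset.sum_singleton, uIt, mul_one] at this
      rw [this]
    have hxeq : ∀ᶠ ε in 𝓝[>] (0:ℝ),
        (∫ ω, Real.exp (-(s * ∑ n ∈ Finset.Icc 1 (Nat.floor (v ε)), κ ε n ω)) ∂(Pq ε))
          = ∑ i, q ε i * uIt (Φ ε) (Nat.floor (v ε)) i := by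
      filter_upwards [hIoc] with ε hε
      rw [hmix ε hε, integral_finsetSum_measure (fun i _ =>
        (exp_integrable (hprob ε) (hmeas ε) (hκnn ε) s hs _ i).smul_measure ENNReal.ofReal_ne_top)]
      refine Finset.sum_congr rfl fun i _ => ?_
      rw [integral_smul_measure, full_int (hprob ε) (hmeas ε) (hκnn ε) (hMRP ε hε) s hs,
        ENNReal.toReal_ofReal ((hq ε hε).1 i), smul_eq_mul]
    have hrow : ∀ ε ∈ Ioc (0:ℝ) ε₀, ∀ i, ∑ j, p ε i j = 1 := by
      intro ε hε i
      simp only [hp ε hε]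
      exact row_one (hprob ε) (hmeas ε) i
    have hle : ∀ ε ∈ Ioc (0:ℝ) ε₀, ∀ i j, Φ ε i j ≤ p ε i j := by
      intro ε hε i j
      rw [hp ε hε]
      exact lapK_le (hprob ε) (hmeas ε) (hκnn ε) s hs i j
    have hnn : ∀ ε i j, 0 ≤ Φ ε i j := fun ε i j => lapK_nonneg s i j
    have hfl : ∀ᶠ ε in 𝓝[>] (0:ℝ), 0 < Nat.floor (v ε) :=
      (tendsto_nat_floor_atTop.comp hvinf).eventually_gt_atTop 0
    have key := asym (n := fun ε => Nat.floor (v ε))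
      (δ := fun ε => 1 - ∑ i, π ε i * ∑ j, Φ ε i j)
      (x := fun ε => ∑ i, q ε i * uIt (Φ ε) (Nat.floor (v ε)) i) (v := v)
      (2 * (oscC b L / (b ^ L / m))) (oscC b L / (b ^ L / m)) _ (hL0 s hs) hvinf (fun _ => rfl)
      ((hconv s hs).congr' hxeq) ?_ ?_ ?_
    · refine key.congr' ?_
      filter_upwards [hδeq] with ε h
      rw [h]
    · filter_upwards [hIoc, hπ] with ε hε hst
      exact (delta_range (hnn ε) (hle ε hε) (hrow ε hε) hst.1 hst.2.1 _ rfl).1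
    · filter_upwards [hIoc, hπ, hU, hp0] with ε hε hst hu h0
      exact main_A hb hb1 hm hu h0 (hrow ε hε) (hnn ε) (hle ε hε) hst.1 hst.2.1 hst.2.2
        (hq ε hε).1 (hq ε hε).2 _ rfl _
    · filter_upwards [hIoc, hπ, hU, hp0, hfl] with ε hε hst hu h0 hn
      exact main_B hb hb1 hm hu h0 (hrow ε hε) (hnn ε) (hle ε hε) hst.1 hst.2.1 hst.2.2
        (hq ε hε).1 (hq ε hε).2 _ rfl _ hn
  · exact neg_pos.2 (Real.log_neg (hL0 s hs) (hL1 s hs))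
  · simpa using (hLt.log one_ne_zero).neg
  · simp only [neg_neg]
    rw [Real.exp_log (hL0 s hs)]
end
end
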